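/- Let Y ⊂ ℙⁿ be a hypersurface of degree d whose only singularity is a point y of multiplicity m, with (Y, y) general among such pairs. Let Σ ⊆ ℙ^{n−1} be the variety of lines in Y through y, identified with a subvariety of the hyperplane {x₀ = 0} after placing y at [1:0:…:0]. Then Σ is the common zero locus in ℙ^{n−1} of d − m + 1 homogeneous polynomials of degrees m, m+1, …, d, and if d ≤ m + n − 2 then Σ is smooth of dimension m + n − 2 − d and degree m·(m+1)⋯d = d!/(m−1)!. -/

import Mathlib

open MvPolynomial

noncomputable section

/-- An (affine) algebraic subset of `ℂ^ι`: the common zero locus of a set of polynomials. -/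
def IsAlgSet {ι : Type*} (S : Set (ι → ℂ)) : Prop :=
  ∃ T : Set (MvPolynomial ι ℂ), S = {x | ∀ p ∈ T, eval x p = 0}

/-- Irreducibility of a set in the Zariski sense. -/
def AlgIrreducible {ι : Type*} (S : Set (ι → ℂ)) : Prop :=
  S.Nonempty ∧ ∀ A B : Set (ι → ℂ), IsAlgSet A → IsAlgSet B →
    S ⊆ A ∪ B → S ⊆ A ∨ S ⊆ B

/-- Krull dimension of a set, via chains of irreducible algebraic subsets. -/
def algDim {ι : Type*} (S : Set (ι → ℂ)) : WithBot ℕ∞ :=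
  Order.krullDim {T : Set (ι → ℂ) // IsAlgSet T ∧ AlgIrreducible T ∧ T ⊆ S}

/-- A polynomial function on a complex vector space. -/
def IsPolynomialFun {M : Type*} [AddCommGroup M] [Module ℂ M] (g : M → ℂ) : Prop :=
  ∃ (k : ℕ) (l : Fin k → (M →ₗ[ℂ] ℂ)) (p : MvPolynomial (Fin k) ℂ),
    ∀ m, g m = eval (fun i => l i m) p

/-- A Zariski-open subset of a complex vector space: the complement of a common zero
locus of polynomial functions. -/
def IsZariskiOpen {M : Type*} [AddCommGroup M] [Module ℂ M] (U : Set M) : Prop :=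
  ∃ T : Set (M → ℂ), (∀ g ∈ T, IsPolynomialFun g) ∧ Uᶜ = {m | ∀ g ∈ T, g m = 0}

set_option synthInstance.maxHeartbeats 1000000

/-
A point `x` of `{X 0 = 0}` lies in `Σ` iff the polynomial `∑ i, u ^ (d - i) * v ^ i * fᵢ(x)`
vanishes for all `u` and `v`, and the powers of `u` being distinct, this separates into `fᵢ(x) = 0`
for all `i`.

Smoothness is an open condition on the coefficients by elimination: the Nullstellensatz turns the
absence of nontrivial zeros into the nonvanishing of a determinant. It is satisfied by some Fermat
forms: if their coefficients are algebraically independent, derivations of `ℂ` with prescribed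
values on the coefficients, applied to the equations of a point, show that the Jacobian matrix
there has full rank.

For the degree, the equations and a linear section of complementary dimension are deformed to the
system `Xᵢ ^ eᵢ = bᵢ X₀ ^ eᵢ`, which has `∏ eᵢ` simple zeros. By the implicit function theorem and
compactness of projective space the number of zeros is locally constant where they all are simple,
and a line in the parameter space minus finitely many points is connected.

For the dimension, the coordinate ring of the cone is integral over the polynomial ring in linear
forms having only the origin in common with the cone, which bounds the dimension from above; the
height theorem bounds it from below.
-/

/-! ### Polynomial functions and Zariski open sets -/

section PolynomialFunctions

variable {M : Type*} [AddCommGroup M] [Module ℂ M] {σ : Type*}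

namespace IsPolynomialFun

theorem const (a : ℂ) : IsPolynomialFun (fun _ : M => a) :=
  ⟨0, fun i => i.elim0, C a, fun m => by simp⟩

theorem linearMap (l : M →ₗ[ℂ] ℂ) : IsPolynomialFun l :=
  ⟨1, fun _ => l, X 0, fun m => by simp⟩

variable {f g : M → ℂ}

theorem add (hf : IsPolynomialFun f) (hg : IsPolynomialFun g) : IsPolynomialFun (f + g) := by
  obtain ⟨k, l, p, hp⟩ := hf
  obtain ⟨k', l', p', hp'⟩ := hg
  exact ⟨k + k', Fin.append l l', rename (Fin.castAdd k') p + rename (Fin.natAdd k) p',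
    fun m => by simp [eval_rename, Function.comp_def, hp, hp']⟩

theorem mul (hf : IsPolynomialFun f) (hg : IsPolynomialFun g) : IsPolynomialFun (f * g) := by
  obtain ⟨k, l, p, hp⟩ := hf
  obtain ⟨k', l', p', hp'⟩ := hg
  exact ⟨k + k', Fin.append l l', rename (Fin.castAdd k') p * rename (Fin.natAdd k) p',
    fun m => by simp [eval_rename, Function.comp_def, hp, hp']⟩

theorem exists_polynomial_eval_lineMap (hf : IsPolynomialFun f) (a b : M) :
    ∃ p : Polynomial ℂ, ∀ t : ℂ, f (AffineMap.lineMap a b t) = p.eval t := by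
  obtain ⟨k, l, p, hp⟩ := hf
  refine ⟨aeval (fun i => Polynomial.X * Polynomial.C (l i (b - a)) + Polynomial.C (l i a)) p,
    fun t => ?_⟩
  rw [hp, ← Polynomial.coe_aeval_eq_eval, ← AlgHom.comp_apply, comp_aeval, ← aeval_eq_eval]
  congr 2
  funext i
  simp [AffineMap.lineMap_apply]

end IsPolynomialFun

variable (M) in
/-- The algebra of polynomial functions on a complex vector space. -/
def polynomialFunSubalgebra : Subalgebra ℂ (M → ℂ) where
  carrier := {g | IsPolynomialFun g}
  add_mem' := IsPolynomialFun.add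
  mul_mem' := IsPolynomialFun.mul
  algebraMap_mem' := IsPolynomialFun.const

variable (M σ) in
/-- The algebra of families of polynomials, parametrized by a complex vector space, whose
coefficients are polynomial functions of the parameter. -/
def polynomialFamilySubalgebra : Subalgebra ℂ (M → MvPolynomial σ ℂ) where
  carrier := {F | ∀ s, (fun x => coeff s (F x)) ∈ polynomialFunSubalgebra M}
  add_mem' hF hG s := by
    simp only [Pi.add_apply, coeff_add]
    exact add_mem (hF s) (hG s)
  mul_mem' {F G} hF hG s := by
    classical
    have h : (fun x => coeff s ((F * G) x)) =
        ∑ ab ∈ Finset.HasAntidiagonal.antidiagonal s,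
          (fun x => coeff ab.1 (F x)) * fun x => coeff ab.2 (G x) := by
      funext x
      simp [coeff_mul]
    rw [h]
    exact sum_mem fun ab _ => mul_mem (hF _) (hG _)
  algebraMap_mem' a s := IsPolynomialFun.const (coeff s (algebraMap ℂ (MvPolynomial σ ℂ) a))

theorem const_mem_polynomialFamilySubalgebra (p : MvPolynomial σ ℂ) :
    (fun _ : M => p) ∈ polynomialFamilySubalgebra M σ :=
  fun s => IsPolynomialFun.const (coeff s p)

theorem linearMap_mem_polynomialFamilySubalgebra (l : M →ₗ[ℂ] MvPolynomial σ ℂ) :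
    (fun x => l x) ∈ polynomialFamilySubalgebra M σ :=
  fun s => IsPolynomialFun.linearMap (lcoeff ℂ s ∘ₗ l)

theorem pderiv_mem_polynomialFamilySubalgebra {F : M → MvPolynomial σ ℂ}
    (hF : F ∈ polynomialFamilySubalgebra M σ) (j : σ) :
    (fun x => pderiv j (F x)) ∈ polynomialFamilySubalgebra M σ := fun s => by
  simp only [coeff_pderiv]
  exact mul_mem (hF _) (IsPolynomialFun.const _)

theorem det_mem_of_forall_apply_mem {S R ι : Type*} [CommRing R] [Algebra ℂ R] [Fintype ι]
    [DecidableEq ι] {T : Subalgebra ℂ (S → R)} {A : S → Matrix ι ι R}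
    (h : ∀ i j, (fun x => A x i j) ∈ T) : (fun x => (A x).det) ∈ T := by
  have hdet : (fun x => (A x).det) =
      ∑ π : Equiv.Perm ι, Equiv.Perm.sign π • ∏ i, fun x => A x (π i) i := by
    funext x
    simp [Matrix.det_apply]
  rw [hdet]
  exact sum_mem fun π _ => zsmul_mem (prod_mem fun i _ => h _ _) _

end PolynomialFunctions

section ZariskiOpen

variable {M : Type*} [AddCommGroup M] [Module ℂ M] {U V : Set M}

theorem isZariskiOpen_iff :
    IsZariskiOpen U ↔
      ∀ a ∈ U, ∃ g, IsPolynomialFun g ∧ g a ≠ 0 ∧ ∀ b, g b ≠ 0 → b ∈ U := by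
  constructor
  · rintro ⟨T, hT, hU⟩ a ha
    have hmem (b : M) : b ∈ U ↔ ∃ g ∈ T, g b ≠ 0 := by
      simpa using (Set.ext_iff.mp hU b).not
    obtain ⟨g, hg, hga⟩ := (hmem a).mp ha
    exact ⟨g, hT g hg, hga, fun b hb => (hmem b).mpr ⟨g, hg, hb⟩⟩
  · intro h
    refine ⟨{g | IsPolynomialFun g ∧ ∀ b, g b ≠ 0 → b ∈ U}, fun g hg => hg.1, ?_⟩
    ext a
    refine ⟨fun ha g hg => not_not.mp fun hga => ha (hg.2 a hga), fun ha haU => ?_⟩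
    obtain ⟨g, hg, hga, hgU⟩ := h a haU
    exact hga (ha g ⟨hg, hgU⟩)

namespace IsZariskiOpen

theorem inter (hU : IsZariskiOpen U) (hV : IsZariskiOpen V) : IsZariskiOpen (U ∩ V) := by
  rw [isZariskiOpen_iff] at *
  rintro a ⟨haU, haV⟩
  obtain ⟨f, hf, hfa, hfU⟩ := hU a haU
  obtain ⟨g, hg, hga, hgV⟩ := hV a haV
  exact ⟨f * g, hf.mul hg, mul_ne_zero hfa hga, fun b hb =>
    ⟨hfU b (left_ne_zero_of_mul hb), hgV b (right_ne_zero_of_mul hb)⟩⟩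

theorem finite_setOf_lineMap_notMem (hU : IsZariskiOpen U) {a b : M} {t₀ : ℂ}
    (h₀ : AffineMap.lineMap a b t₀ ∈ U) : {t : ℂ | AffineMap.lineMap a b t ∉ U}.Finite := by
  obtain ⟨g, hg, hg₀, hgU⟩ := isZariskiOpen_iff.mp hU _ h₀
  obtain ⟨p, hp⟩ := hg.exists_polynomial_eval_lineMap a b
  have hp0 : p ≠ 0 := by
    rintro rfl
    exact hg₀ (by simpa using hp t₀)
  refine (Polynomial.finite_setOfPred_isRoot hp0).subset fun t ht => ?_
  by_contra hroot
  exact ht (hgU _ (by rwa [hp]))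

theorem inter_nonempty (hU : IsZariskiOpen U) (hV : IsZariskiOpen V) (hU' : U.Nonempty)
    (hV' : V.Nonempty) : (U ∩ V).Nonempty := by
  obtain ⟨a, ha⟩ := hU'
  obtain ⟨b, hb⟩ := hV'
  have hfin := (hU.finite_setOf_lineMap_notMem (a := a) (b := b) (t₀ := 0) (by simpa)).union
    (hV.finite_setOf_lineMap_notMem (a := a) (b := b) (t₀ := 1) (by simpa))
  obtain ⟨t, ht⟩ := hfin.infinite_compl.nonempty
  simp only [Set.mem_compl_iff, Set.mem_union, Set.mem_ofPred_eq, not_or, not_not] at ht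
  exact ⟨_, ht⟩

end IsZariskiOpen

end ZariskiOpen

/-! ### Homogeneous polynomials and elimination -/

section Homogeneous

variable {R σ ι : Type*}

theorem eval_smul_of_isHomogeneous [CommSemiring R] {p : MvPolynomial σ R} {e : ℕ}
    (hp : p.IsHomogeneous e) (r : R) (x : σ → R) : eval (r • x) p = r ^ e * eval x p := by
  rw [eval_eq, eval_eq, Finset.mul_sum]
  refine Finset.sum_congr rfl fun s hs => ?_
  simp only [Pi.smul_apply, smul_eq_mul, mul_pow, Finset.prod_mul_distrib]
  rw [Finset.prod_pow_eq_pow_sum, ← hp.degree_eq_sum_deg_support hs]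
  ring

theorem isHomogeneous_det [CommRing R] [Fintype ι] [DecidableEq ι]
    {A : Matrix ι ι (MvPolynomial σ R)} {e : ι → ℕ} (hA : ∀ i j, (A i j).IsHomogeneous (e i)) :
    A.det.IsHomogeneous (∑ i, e i) := by
  rw [Matrix.det_apply]
  refine IsHomogeneous.sum _ _ _ fun π _ => ?_
  rw [Units.smul_def, ← Equiv.sum_comp π e]
  exact zsmul_mem (K := homogeneousSubmodule σ R (∑ i, e (π i)))
    (IsHomogeneous.prod _ _ _ fun i _ => hA _ _) _

theorem homogeneousComponent_mul_right [CommSemiring R] {q : MvPolynomial σ R} {e : ℕ}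
    (hq : q.IsHomogeneous e) (p : MvPolynomial σ R) (N : ℕ) :
    homogeneousComponent N (p * q) =
      if e ≤ N then homogeneousComponent (N - e) p * q else 0 := by
  let := gradedAlgebra (σ := σ) (R := R)
  have hcomp (r : MvPolynomial σ R) (k : ℕ) :
      (DirectSum.decompose (homogeneousSubmodule σ R) r k : MvPolynomial σ R) =
        homogeneousComponent k r :=
    decomposition.decompose'_apply r k
  simpa only [hcomp] using
    DirectSum.coe_decompose_mul_of_right_mem (homogeneousSubmodule σ R) (a := p) N hq

theorem exists_isHomogeneous_sum_mul_eq [CommSemiring R] [Fintype ι]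
    {F : ι → MvPolynomial σ R} {e : ι → ℕ} (hF : ∀ i, (F i).IsHomogeneous (e i))
    {p : MvPolynomial σ R} {N : ℕ} (hp : p.IsHomogeneous N)
    (hpF : p ∈ Ideal.span (Set.range F)) :
    ∃ g : ι → MvPolynomial σ R, (∀ i, e i ≤ N → (g i).IsHomogeneous (N - e i)) ∧
      (∀ i, N < e i → g i = 0) ∧ ∑ i, g i * F i = p := by
  obtain ⟨g, hg⟩ := Ideal.mem_span_range_iff_exists_fun.mp hpF
  refine ⟨fun i => if e i ≤ N then homogeneousComponent (N - e i) (g i) else 0,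
    fun i hi => ?_, fun i hi => if_neg hi.not_ge, ?_⟩
  · simp only [if_pos hi]
    exact homogeneousComponent_isHomogeneous _ _
  · rw [← homogeneousComponent_eq_self hp, ← hg, map_sum]
    refine Finset.sum_congr rfl fun i _ => ?_
    rw [homogeneousComponent_mul_right (hF i), ite_mul, zero_mul]

/-- A system of homogeneous polynomials whose only common zero is the origin, that is, whose
projective zero locus is empty. -/
def HasOnlyTrivialZero [CommSemiring R] (F : ι → MvPolynomial σ R) : Prop :=
  ∀ x : σ → R, (∀ i, eval x (F i) = 0) → x = 0

theorem HasOnlyTrivialZero.exists_forall_monomial_mem_span {K : Type*} [Field K] [IsAlgClosed K]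
    [Finite σ] {F : ι → MvPolynomial σ K} (h : HasOnlyTrivialZero F) :
    ∃ N : ℕ, ∀ s : σ →₀ ℕ, N ≤ s.degree → monomial s (1 : K) ∈ Ideal.span (Set.range F) := by
  have := Fintype.ofFinite σ
  have hpow (j : σ) : ∃ N : ℕ, (X j : MvPolynomial σ K) ^ N ∈ Ideal.span (Set.range F) := by
    suffices X j ∈ (Ideal.span (Set.range F)).radical from this
    rw [← vanishingIdeal_zeroLocus_eq_radical (k := K) (K := K), mem_vanishingIdeal_iff]
    intro x hx
    have hx0 : x = 0 := h x fun i => hx (F i) (Ideal.subset_span ⟨i, rfl⟩)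
    simp [hx0]
  choose N hN using hpow
  refine ⟨∑ j, N j + 1, fun s hs => ?_⟩
  obtain ⟨j, hj⟩ : ∃ j, N j ≤ s j := by
    by_contra! hlt
    have hsum : s.degree ≤ ∑ j, N j := by
      rw [Finsupp.degree_eq_sum]
      exact Finset.sum_le_sum fun j _ => (hlt j).le
    omega
  have hs : monomial s (1 : K) = monomial (s - Finsupp.single j (N j)) 1 * X j ^ N j := by
    rw [X_pow_eq_monomial, monomial_mul, tsub_add_cancel_of_le (by simpa using hj), one_mul]
  exact hs ▸ Ideal.mul_mem_left _ _ (hN j)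

theorem eq_zero_of_det_coeff_ne_zero [CommRing R] [IsDomain R] [DecidableEq σ] {N : ℕ}
    {T : Finset (σ →₀ ℕ)} (hT : ∀ s, s ∈ T ↔ s.degree = N) {P : T → MvPolynomial σ R}
    (hP : ∀ s, (P s).IsHomogeneous N)
    (hdet : (Matrix.of fun s s' => coeff s'.1 (P s)).det ≠ 0)
    {x : σ → R} (hx : ∀ s, eval x (P s) = 0) : x = 0 := by
  let v : T → R := fun s => s.1.prod fun j k => x j ^ k
  have hv : (Matrix.of fun s s' => coeff s'.1 (P s)).mulVec v = 0 := by
    ext s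
    rw [Pi.zero_apply, ← hx s, eval_eq, Matrix.mulVec, dotProduct]
    simp only [Matrix.of_apply, v]
    rw [Finset.sum_coe_sort T fun s' => coeff s' (P s) * s'.prod fun j k => x j ^ k]
    refine (Finset.sum_subset (fun s' hs' => ?_) fun s' _ hs' => ?_).symm
    · rw [hT]
      by_contra hdeg
      exact mem_support_iff.mp hs' ((hP s).coeff_eq_zero hdeg)
    · rw [notMem_support_iff.mp hs', zero_mul]
  have hv0 := Matrix.eq_zero_of_mulVec_eq_zero hdet hv
  ext j
  have hj : x j ^ N = 0 := by
    simpa [v] using congrFun hv0 ⟨Finsupp.single j N, by simp [hT]⟩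
  exact eq_zero_of_pow_eq_zero hj

end Homogeneous

section Elimination

variable {M σ ι : Type*} [AddCommGroup M] [Module ℂ M] [Finite σ] [Finite ι]

-- At a parameter `a` in the set, every monomial of some degree `N` is a combination of the forms
-- `F a i`; with the same multipliers, the `N`-forms obtained from `F b` still span all `N`-forms
-- as long as the determinant of their coefficient matrix does not vanish.
theorem isZariskiOpen_setOf_hasOnlyTrivialZero {F : M → ι → MvPolynomial σ ℂ} {e : ι → ℕ}
    (hF : ∀ a i, (F a i).IsHomogeneous (e i))
    (hpoly : ∀ i, (fun a => F a i) ∈ polynomialFamilySubalgebra M σ) :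
    IsZariskiOpen {a | HasOnlyTrivialZero (F a)} := by
  classical
  have := Fintype.ofFinite σ
  have := Fintype.ofFinite ι
  refine isZariskiOpen_iff.mpr fun a ha => ?_
  obtain ⟨N, hN⟩ := HasOnlyTrivialZero.exists_forall_monomial_mem_span ha
  obtain ⟨T, hT⟩ : ∃ T : Finset (σ →₀ ℕ), ∀ s, s ∈ T ↔ s.degree = N :=
    ⟨Finset.finsuppAntidiag Finset.univ N, by
      simp [Finset.mem_finsuppAntidiag, Finsupp.degree_eq_sum]⟩
  have hdeg (s : T) : s.1.degree = N := (hT _).mp s.2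
  choose g hg hg0 hgF using fun s : T =>
    exists_isHomogeneous_sum_mul_eq (hF a) (isHomogeneous_monomial 1 (hdeg s)) (hN s (hdeg s).ge)
  have hhom (b : M) (s : T) : (∑ i, g s i * F b i).IsHomogeneous N :=
    IsHomogeneous.sum _ _ _ fun i _ => by
      rcases le_or_gt (e i) N with hi | hi
      · exact Nat.sub_add_cancel hi ▸ (hg s i hi).mul (hF b i)
      · rw [hg0 s i hi, zero_mul]
        exact isHomogeneous_zero _ _ _
  let A : M → Matrix T T ℂ := fun b => Matrix.of fun s s' => coeff s'.1 (∑ i, g s i * F b i)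
  have hAa : A a = 1 := by
    ext s s'
    simp only [A, hgF, coeff_monomial, Matrix.one_apply, Subtype.ext_iff, Matrix.of_apply]
  have hA (s s' : T) : (fun b => A b s s') ∈ polynomialFunSubalgebra M := by
    have hfam : ∑ i, (fun _ => g s i) * (fun b => F b i) ∈ polynomialFamilySubalgebra M σ :=
      sum_mem fun i _ => mul_mem (const_mem_polynomialFamilySubalgebra _) (hpoly i)
    convert hfam s'.1
    simp [A]
  refine ⟨fun b => (A b).det, det_mem_of_forall_apply_mem hA, by simp [hAa], fun b hb x hx => ?_⟩
  exact eq_zero_of_det_coeff_ne_zero hT (hhom b) hb fun s => by simp [hx]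

end Elimination

/-! ### Smooth cones -/

section SmoothCone

variable {R σ ι : Type*}

theorem surjective_mulVecLin_iff_exists_det_submatrix_ne_zero {K κ : Type*} [Field K]
    [Fintype ι] [DecidableEq ι] [Fintype κ] (A : Matrix ι κ K) :
    Function.Surjective A.mulVecLin ↔ ∃ r : ι → κ, (A.submatrix id r).det ≠ 0 := by
  classical
  constructor
  · intro h
    obtain ⟨κ', r, -, hspan, hli⟩ := exists_linearIndependent' K A.col
    rw [← Matrix.range_mulVecLin, LinearMap.range_eq_top.mpr h] at hspan
    let φ := (Pi.basisFun K ι).indexEquiv (Module.Basis.mk hli hspan.ge)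
    refine ⟨r ∘ φ, ?_⟩
    rw [← isUnit_iff_ne_zero, ← Matrix.isUnit_iff_isUnit_det,
      ← Matrix.linearIndependent_cols_iff_isUnit]
    exact hli.comp φ φ.injective
  · rintro ⟨r, hr⟩
    have hA : A * (1 : Matrix κ κ K).submatrix id r = A.submatrix id r :=
      Matrix.mul_submatrix_one (Equiv.refl κ) r A
    refine Matrix.mulVec_surjective_iff_exists_right_inverse.mpr
      ⟨(1 : Matrix κ κ K).submatrix id r * (A.submatrix id r)⁻¹, ?_⟩
    rw [← Matrix.mul_assoc, hA,
      Matrix.mul_nonsing_inv _ (isUnit_iff_ne_zero.mpr hr)]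

/-- The Jacobian matrix of a system of polynomials. -/
def jacobianMatrix [CommSemiring R] (G : ι → MvPolynomial σ R) :
    Matrix ι σ (MvPolynomial σ R) :=
  Matrix.of fun i j => pderiv j (G i)

/-- The affine cone cut out by `G` is a smooth complete intersection away from the origin, by the
Jacobian criterion. -/
def IsSmoothCone [CommSemiring R] [Fintype σ] (G : ι → MvPolynomial σ R) : Prop :=
  ∀ x : σ → R, x ≠ 0 → (∀ i, eval x (G i) = 0) →
    Function.Surjective ((jacobianMatrix G).map (eval x)).mulVecLin

/-- The maximal minor of the Jacobian matrix of `G` on the columns listed by `r`. -/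
def jacobianMinor [CommRing R] [Fintype ι] [DecidableEq ι] (G : ι → MvPolynomial σ R)
    (r : ι → σ) : MvPolynomial σ R :=
  ((jacobianMatrix G).submatrix id r).det

variable [Fintype ι] [DecidableEq ι]

theorem eval_jacobianMinor [CommRing R] (G : ι → MvPolynomial σ R) (r : ι → σ) (x : σ → R) :
    eval x (jacobianMinor G r) = (((jacobianMatrix G).map (eval x)).submatrix id r).det :=
  RingHom.map_det _ _

theorem isHomogeneous_jacobianMinor [CommRing R] {G : ι → MvPolynomial σ R} {e : ι → ℕ}
    (hG : ∀ i, (G i).IsHomogeneous (e i)) (r : ι → σ) :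
    (jacobianMinor G r).IsHomogeneous (∑ i, (e i - 1)) :=
  isHomogeneous_det fun i _ => (hG i).pderiv

theorem jacobianMinor_mem_polynomialFamilySubalgebra {M : Type*} [AddCommGroup M] [Module ℂ M]
    {F : M → ι → MvPolynomial σ ℂ}
    (hF : ∀ i, (fun a => F a i) ∈ polynomialFamilySubalgebra M σ) (r : ι → σ) :
    (fun a => jacobianMinor (F a) r) ∈ polynomialFamilySubalgebra M σ :=
  det_mem_of_forall_apply_mem fun i _ => pderiv_mem_polynomialFamilySubalgebra (hF i) _

theorem isSmoothCone_iff_hasOnlyTrivialZero {K : Type*} [Field K] [Fintype σ]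
    {G : ι → MvPolynomial σ K} :
    IsSmoothCone G ↔ HasOnlyTrivialZero (Sum.elim G (jacobianMinor G)) := by
  simp only [IsSmoothCone, HasOnlyTrivialZero, Sum.forall, Sum.elim_inl, Sum.elim_inr,
    eval_jacobianMinor, surjective_mulVecLin_iff_exists_det_submatrix_ne_zero]
  refine forall_congr' fun x => ?_
  rw [← not_forall_not]
  simp only [not_not]
  tauto

end SmoothCone

theorem isZariskiOpen_setOf_isSmoothCone {M σ ι : Type*} [AddCommGroup M] [Module ℂ M] [Fintype σ]
    [Finite ι] {F : M → ι → MvPolynomial σ ℂ} {e : ι → ℕ} (hF : ∀ a i, (F a i).IsHomogeneous (e i))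
    (hpoly : ∀ i, (fun a => F a i) ∈ polynomialFamilySubalgebra M σ) :
    IsZariskiOpen {a | IsSmoothCone (F a)} := by
  classical
  have := Fintype.ofFinite ι
  simp only [isSmoothCone_iff_hasOnlyTrivialZero]
  refine isZariskiOpen_setOf_hasOnlyTrivialZero (e := Sum.elim e fun _ => ∑ i, (e i - 1))
    (fun a => ?_) ?_
  · rintro (i | r)
    exacts [hF a i, isHomogeneous_jacobianMinor (hF a) r]
  · rintro (i | r)
    exacts [hpoly i, jacobianMinor_mem_polynomialFamilySubalgebra hpoly r]

/-! ### Derivations of `ℂ` and the existence of smooth cones -/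

section Derivation

theorem exists_derivation_algebraMap_eq {R S T M : Type*} [CommRing R] [CommRing S] [CommRing T]
    [Algebra R S] [Algebra R T] [Algebra S T] [IsScalarTower R S T] [Algebra.FormallyEtale S T]
    [AddCommGroup M] [Module R M] [Module S M] [Module T M] [IsScalarTower R S M]
    [IsScalarTower R T M] [IsScalarTower S T M] (d : Derivation R S M) :
    ∃ D : Derivation R T M, ∀ s, D (algebraMap S T s) = d s := by
  let f : Ω[T⁄R] →ₗ[T] M := d.liftKaehlerDifferential.liftBaseChange T ∘ₗ
    (KaehlerDifferential.tensorKaehlerEquivOfFormallyEtale R S T).symm.toLinearMap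
  refine ⟨f.compDer (KaehlerDifferential.D R T), fun s => ?_⟩
  simp [f, KaehlerDifferential.tensorKaehlerEquivOfFormallyEtale_symm_D_algebraMap]

theorem formallyEtale_of_isAlgebraic {S K : Type*} [CommRing S] [IsDomain S] [Field K] [CharZero K]
    [Algebra S K] [FaithfulSMul S K] [Algebra.IsAlgebraic S K] : Algebra.FormallyEtale S K := by
  let := FractionRing.liftAlgebra S K
  have := FractionRing.isScalarTower_liftAlgebra S K
  have : CharZero (FractionRing S) := (algebraMap (FractionRing S) K).charZero
  have : Algebra.IsAlgebraic (FractionRing S) K :=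
    (IsFractionRing.comap_isAlgebraic_iff (A := S)).mp ‹_›
  have := Algebra.FormallyEtale.of_isLocalization (Rₘ := FractionRing S) (nonZeroDivisors S)
  have := Algebra.FormallyEtale.of_isSeparable (FractionRing S) K
  exact .comp S (FractionRing S) K

theorem exists_derivation_of_isTranscendenceBasis {k K ι : Type*} [Field k] [Field K] [CharZero K]
    [Algebra k K] {v : ι → K} (hv : IsTranscendenceBasis k v) (w : ι → K) :
    ∃ D : Derivation k K K, ∀ i, D (v i) = w i := by
  let := (aeval (R := k) v).toAlgebra
  have : FaithfulSMul (MvPolynomial ι k) K :=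
    (faithfulSMul_iff_algebraMap_injective _ _).mpr hv.1
  have : Algebra.IsAlgebraic (MvPolynomial ι k) K :=
    (Algebra.isAlgebraic_ringHom_iff_of_comp_eq hv.1.aevalEquiv (RingEquiv.refl K)
      (RingHom.ext hv.1.algebraMap_aevalEquiv)).mp hv.isAlgebraic
  have := formallyEtale_of_isAlgebraic (S := MvPolynomial ι k) (K := K)
  obtain ⟨D, hD⟩ := exists_derivation_algebraMap_eq (T := K) (mkDerivation k w)
  exact ⟨D, fun i => by simpa [RingHom.algebraMap_toAlgebra] using hD (X i)⟩

theorem exists_forall_exists_derivation_eq (ι : Type*) [Finite ι] :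
    ∃ a : ι → ℂ, ∀ w : ι → ℂ, ∃ D : Derivation ℚ ℂ ℂ, ∀ i, D (a i) = w i := by
  obtain ⟨κ, v, hv⟩ := exists_isTranscendenceBasis' ℚ ℂ
  have hκ : Cardinal.mk ℂ = Cardinal.mk κ :=
    IsAlgClosed.cardinal_eq_cardinal_transcendence_basis_of_aleph0_lt' v hv (by simp)
      (by simpa using Cardinal.aleph0_lt_continuum)
  have : Infinite κ := Cardinal.infinite_iff.mpr (by simp [← hκ, Cardinal.aleph0_le_continuum])
  obtain ⟨f⟩ : Nonempty (ι ↪ κ) :=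
    ⟨(Finite.equivFin ι).toEmbedding.trans (Fin.valEmbedding.trans (Infinite.natEmbedding κ))⟩
  refine ⟨v ∘ f, fun w => ?_⟩
  obtain ⟨D, hD⟩ := exists_derivation_of_isTranscendenceBasis hv (Function.extend f w 0)
  exact ⟨D, fun i => by rw [Function.comp_apply, hD, f.injective.extend_apply]⟩

end Derivation

section DiagonalForm

variable {σ R : Type*} [Fintype σ] [CommRing R]

/-- The diagonal form `∑ j, b j * X j ^ e`: a linear form for `e = 1`, and a form of Fermat type in
general. -/
def diagonalForm (b : σ → R) (e : ℕ) : MvPolynomial σ R :=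
  ∑ j, C (b j) * X j ^ e

theorem isHomogeneous_diagonalForm (b : σ → R) (e : ℕ) : (diagonalForm b e).IsHomogeneous e :=
  IsHomogeneous.sum _ _ _ fun j _ => isHomogeneous_C_mul_X_pow (b j) j e

theorem eval_diagonalForm (b : σ → R) (e : ℕ) (x : σ → R) :
    eval x (diagonalForm b e) = ∑ j, b j * x j ^ e := by
  simp [diagonalForm]

theorem pderiv_diagonalForm (b : σ → R) (e : ℕ) (j : σ) :
    pderiv j (diagonalForm b e) = C (e * b j) * X j ^ (e - 1) := by
  classical
  rw [diagonalForm, map_sum, Finset.sum_eq_single j]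
  · simp only [Derivation.leibniz, Derivation.leibniz_pow, pderiv_X, Pi.single_eq_same,
      smul_eq_mul, mul_one, nsmul_eq_mul, derivation_C, mul_zero, add_zero, C_mul, map_natCast]
    ring
  · intro i _ hij
    simp [Derivation.leibniz_pow, pderiv_X_of_ne hij]
  · simp

theorem diagonalForm_mem_supported {b : σ → R} {s : Set σ} (hb : ∀ j ∉ s, b j = 0) (e : ℕ) :
    diagonalForm b e ∈ supported R s :=
  sum_mem fun j _ => by
    by_cases hj : j ∈ s
    · exact mul_mem (Subalgebra.algebraMap_mem _ _)
        (pow_mem (Algebra.subset_adjoin (Set.mem_image_of_mem X hj)) _)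
    · simp [hb j hj]

theorem derivation_eval_diagonalForm {k K : Type*} [CommRing k] [Field K] [Algebra k K]
    (D : Derivation k K K) (b : σ → K) (e : ℕ) (x : σ → K) :
    D (eval x (diagonalForm b e)) =
      ∑ j, eval x (pderiv j (diagonalForm b e)) * D (x j) +
        eval x (diagonalForm (fun j => D (b j)) e) := by
  simp only [eval_diagonalForm, pderiv_diagonalForm, map_sum, Derivation.leibniz,
    Derivation.leibniz_pow, ← Finset.sum_add_distrib, map_mul, map_pow, eval_C, eval_X, smul_eq_mul,
    nsmul_eq_mul]
  exact Finset.sum_congr rfl fun j _ => by ring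

end DiagonalForm

section HyperplaneSystem

variable {R σ ι : Type*}

/-- The system `G` together with the coordinate `X o`, cutting out the intersection of the zero
locus of `G` with the coordinate hyperplane `{x o = 0}`. -/
def hyperplaneSystem [CommSemiring R] (o : σ) (G : ι → MvPolynomial σ R) :
    Option ι → MvPolynomial σ R :=
  fun i => i.elim (X o) G

section CommSemiring

variable [CommSemiring R] {o : σ} {G : ι → MvPolynomial σ R}

theorem forall_eval_hyperplaneSystem_eq_zero_iff {x : σ → R} :
    (∀ i, eval x (hyperplaneSystem o G i) = 0) ↔ x o = 0 ∧ ∀ i, eval x (G i) = 0 := by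
  simp [hyperplaneSystem, Option.forall]

theorem isHomogeneous_hyperplaneSystem {e : ι → ℕ} (hG : ∀ i, (G i).IsHomogeneous (e i))
    (i : Option ι) : (hyperplaneSystem o G i).IsHomogeneous (i.elim 1 e) := by
  cases i
  exacts [isHomogeneous_X _ _, hG _]

theorem jacobianMatrix_hyperplaneSystem_map_eval [DecidableEq σ] (x : σ → R) :
    (jacobianMatrix (hyperplaneSystem o G)).map (eval x) =
      fun i j => i.elim (if j = o then 1 else 0) fun i => eval x (pderiv j (G i)) := by
  ext i j
  cases i <;> simp [jacobianMatrix, hyperplaneSystem, pderiv_X, Pi.single_apply, eq_comm]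

end CommSemiring

-- A common zero `x` is acted on by derivations `D` of `ℂ`: applying `D` to the equations expresses
-- the product of the Jacobian matrix at `x` with the vector `D x` through the values of `D` on the
-- coefficients of the equations, which are arbitrary when the coefficients are chosen
-- algebraically independent.
theorem exists_isSmoothCone_hyperplaneSystem_diagonalForm [Fintype σ] [Finite ι] (o : σ)
    (e : ι → ℕ) :
    ∃ b : ι → σ → ℂ, (∀ i, b i o = 0) ∧
      IsSmoothCone (hyperplaneSystem o fun i => diagonalForm (b i) (e i)) := by
  classical
  obtain ⟨a, ha⟩ := exists_forall_exists_derivation_eq (ι × σ)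
  refine ⟨fun i => Function.update (fun j => a (i, j)) o 0, fun i => Function.update_self .., ?_⟩
  set b : ι → σ → ℂ := fun i => Function.update (fun j => a (i, j)) o 0
  intro x hx hzero y
  have hxo : x o = 0 := by simpa [hyperplaneSystem] using hzero none
  obtain ⟨j₀, hj₀⟩ : ∃ j, x j ≠ 0 := Function.ne_iff.mp hx
  have hj₀o : j₀ ≠ o := fun h => hj₀ (h ▸ hxo)
  obtain ⟨D, hD⟩ := ha fun p => if p.2 = j₀ then -(y (some p.1) / x j₀ ^ e p.1) else 0
  have hDb (i : ι) (j : σ) : D (b i j) = if j = j₀ then -(y (some i) / x j₀ ^ e i) else 0 := by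
    rcases eq_or_ne j o with rfl | hj
    · simp [b, hj₀o.symm]
    · simp [b, hj, hD]
  refine ⟨Function.update (fun j => D (x j)) o (y none), funext fun i => ?_⟩
  rw [Matrix.mulVecLin_apply, Matrix.mulVec, dotProduct]
  cases i with
  | none => simp [jacobianMatrix, hyperplaneSystem, pderiv_X, Pi.single_apply, apply_ite]
  | some i =>
    have hzero' : eval x (diagonalForm (b i) (e i)) = 0 := hzero (some i)
    have hbo : eval x (pderiv o (diagonalForm (b i) (e i))) = 0 := by
      simp [pderiv_diagonalForm, b]
    have h := derivation_eval_diagonalForm D (b i) (e i) x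
    rw [hzero', map_zero, eval_diagonalForm] at h
    simp only [hDb, ite_mul, zero_mul, Finset.sum_ite_eq', Finset.mem_univ,
      if_true] at h
    rw [neg_mul, div_mul_cancel₀ _ (pow_ne_zero _ hj₀), eq_comm, add_neg_eq_zero] at h
    rw [← h]
    refine Finset.sum_congr rfl fun j _ => ?_
    rcases eq_or_ne j o with rfl | hj
    · simp [jacobianMatrix, hyperplaneSystem, hbo]
    · simp [jacobianMatrix, hyperplaneSystem, hj]

end HyperplaneSystem

/-! ### Deformation of simple zeros -/

section Counting

open Topology Filter

variable {T E : Type*} [TopologicalSpace T] [TopologicalSpace E] {Z : T → Set E} {t₀ : T}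

theorem exists_isOpen_eventually_inter_eq_singleton {ψ : T → E} {z₀ : E}
    (hψ : ContinuousAt ψ t₀) (hψ₀ : ψ t₀ = z₀)
    (hZ : ∀ᶠ v in 𝓝 (t₀, z₀), v.2 ∈ Z v.1 ↔ ψ v.1 = v.2) {W : Set E} (hW : W ∈ 𝓝 z₀) :
    ∃ V ⊆ W, IsOpen V ∧ z₀ ∈ V ∧ ∀ᶠ t in 𝓝 t₀, ∃ z, Z t ∩ V = {z} := by
  rw [nhds_prod_eq, eventually_prod_iff] at hZ
  obtain ⟨p, hp, q, hq, hpq⟩ := hZ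
  obtain ⟨V, hVW, hV, hz₀V⟩ := mem_nhds_iff.mp (inter_mem hW hq)
  refine ⟨V, fun z hz => (hVW hz).1, hV, hz₀V, ?_⟩
  have hψV : ∀ᶠ t in 𝓝 t₀, ψ t ∈ V := hψ.eventually_mem (hψ₀ ▸ hV.mem_nhds hz₀V)
  filter_upwards [hp, hψV] with t ht htV
  refine ⟨ψ t, Set.ext fun z => ⟨fun hz => ?_, ?_⟩⟩
  · exact ((hpq ht (hVW hz.2).2).mp hz.1).symm
  · rintro rfl
    exact ⟨(hpq ht (hVW htV).2).mpr rfl, htV⟩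

theorem finite_of_isCompact_of_eventually_inter_eq_singleton
    (hsimple : ∀ z ∈ Z t₀, ∀ W ∈ 𝓝 z, ∃ V ⊆ W, IsOpen V ∧ z ∈ V ∧
      ∀ᶠ t in 𝓝 t₀, ∃ z', Z t ∩ V = {z'})
    (hcompact : IsCompact (Z t₀)) : (Z t₀).Finite := by
  by_contra hinf
  obtain ⟨z, hz, hacc⟩ := Set.Infinite.exists_accPt_of_subset_isCompact hinf hcompact subset_rfl
  obtain ⟨V, -, hV, hzV, hVZ⟩ := hsimple z hz _ univ_mem
  obtain ⟨z', hz'⟩ := hVZ.self_of_nhds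
  obtain ⟨w, ⟨hwV, hw⟩, hwz⟩ := accPt_iff_nhds.mp hacc V (hV.mem_nhds hzV)
  exact hwz ((hz'.subset ⟨hw, hwV⟩).trans (hz'.subset ⟨hz, hzV⟩).symm)

theorem eventually_ncard_eq_of_eventually_inter_eq_singleton [T2Space E]
    (hsimple : ∀ z ∈ Z t₀, ∀ W ∈ 𝓝 z, ∃ V ⊆ W, IsOpen V ∧ z ∈ V ∧
      ∀ᶠ t in 𝓝 t₀, ∃ z', Z t ∩ V = {z'})
    (hfin : (Z t₀).Finite)
    (hproper : ∀ W, IsOpen W → Z t₀ ⊆ W → ∀ᶠ t in 𝓝 t₀, Z t ⊆ W) :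
    ∀ᶠ t in 𝓝 t₀, (Z t).ncard = (Z t₀).ncard := by
  obtain ⟨W, hW, hdisj⟩ := hfin.t2_separation
  choose! V hVW hV hzV hVZ using fun z hz => hsimple z hz (W z) ((hW z).2.mem_nhds (hW z).1)
  have hcover : ∀ᶠ t in 𝓝 t₀, Z t ⊆ ⋃ z ∈ Z t₀, V z :=
    hproper _ (isOpen_biUnion hV) fun z hz => Set.mem_biUnion hz (hzV z hz)
  filter_upwards [hcover, hfin.eventually_all.mpr hVZ] with t ht htV
  choose! φ hφ using htV
  have hφmem (z : E) (hz : z ∈ Z t₀) : φ z ∈ Z t ∩ V z := (hφ z hz).superset rfl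
  have himage : Z t = φ '' Z t₀ := by
    refine subset_antisymm (fun z' hz' => ?_) (Set.image_subset_iff.mpr fun z hz => (hφmem z hz).1)
    obtain ⟨z, hz, hzz'⟩ := Set.mem_iUnion₂.mp (ht hz')
    exact ⟨z, hz, ((hφ z hz).subset ⟨hz', hzz'⟩).symm⟩
  rw [himage]
  refine Set.InjOn.ncard_image fun z hz w hw hzw => ?_
  refine hdisj.elim_set hz hw (φ z) (hVW z hz (hφmem z hz).2) ?_
  exact hVW w hw (hzw ▸ (hφmem w hw).2)

end Counting

section ImplicitFunction

open Topology

variable {τ κ : Type*}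

theorem eval_lineMap_apply {R : Type*} [CommRing R] (A B : κ → MvPolynomial τ R) (t : R)
    (x : τ → R) (i : κ) :
    eval x (AffineMap.lineMap A B t i) = (1 - t) * eval x (A i) + t * eval x (B i) := by
  simp [AffineMap.lineMap_apply_module]

variable [Fintype τ]

theorem hasFDerivAt_eval (p : MvPolynomial τ ℂ) (x : τ → ℂ) :
    HasFDerivAt (fun x => eval x p)
      (∑ j, eval x (pderiv j p) • ContinuousLinearMap.proj (R := ℂ) (φ := fun _ => ℂ) j) x := by
  classical
  induction p using MvPolynomial.induction_on with
  | C a =>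
    simp only [eval_C]
    exact (hasFDerivAt_const a x).congr_fderiv (ContinuousLinearMap.ext fun v => by simp)
  | add p q hp hq =>
    simp only [map_add]
    refine (hp.add hq).congr_fderiv (ContinuousLinearMap.ext fun v => ?_)
    simp [add_mul, Finset.sum_add_distrib]
  | mul_X p i hp =>
    simp only [map_mul, eval_X]
    refine (hp.mul (hasFDerivAt_apply i x)).congr_fderiv (ContinuousLinearMap.ext fun v => ?_)
    simp [Derivation.leibniz, pderiv_X, Pi.single_apply, apply_ite, add_mul, Finset.mul_sum,
      Finset.sum_add_distrib, mul_assoc]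

theorem contDiff_eval_lineMap [Fintype κ] (A B : κ → MvPolynomial τ ℂ) :
    ContDiff ℂ 1 fun (v : ℂ × (τ → ℂ)) i => eval v.2 (AffineMap.lineMap A B v.1 i) := by
  have heval (p : MvPolynomial τ ℂ) : ContDiff ℂ 1 fun v : ℂ × (τ → ℂ) => eval v.2 p :=
    (contDiff_iff_contDiffAt.mpr fun x =>
      (AnalyticOnNhd.eval_mvPolynomial p x trivial).contDiffAt).comp contDiff_snd
  simp only [eval_lineMap_apply]
  exact contDiff_pi.mpr fun i =>
    ((contDiff_const.sub contDiff_fst).mul (heval _)).add (contDiff_fst.mul (heval _))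

theorem exists_implicitFunction_of_bijective {E F : Type*} [NormedAddCommGroup E] [NormedSpace ℂ E]
    [FiniteDimensional ℂ E] [NormedAddCommGroup F] [NormedSpace ℂ F] {f : ℂ × E → F} {t₀ : ℂ}
    {x₀ : E} (hf : ContDiffAt ℂ 1 f (t₀, x₀)) {J : E →L[ℂ] F}
    (hfJ : HasFDerivAt (fun x => f (t₀, x)) J x₀) (hJ : Function.Bijective J) :
    ∃ ψ : ℂ → E, ContinuousAt ψ t₀ ∧ ψ t₀ = x₀ ∧
      ∀ᶠ v in 𝓝 (t₀, x₀), f v = f (t₀, x₀) ↔ ψ v.1 = v.2 := by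
  have : FiniteDimensional ℂ F := Module.Finite.of_surjective J.toLinearMap hJ.surjective
  have := FiniteDimensional.complete ℂ E
  have hpartial : fderiv ℂ f (t₀, x₀) ∘L .inr ℂ ℂ E = J :=
    ((hf.differentiableAt one_ne_zero).hasFDerivAt.comp x₀
      (hasFDerivAt_prodMk_right t₀ x₀)).unique hfJ
  have hinv : (fderiv ℂ f (t₀, x₀) ∘L .inr ℂ ℂ E).IsInvertible := by
    rw [hpartial]
    exact ⟨(LinearEquiv.ofBijective J.toLinearMap hJ).toContinuousLinearEquiv,
      ContinuousLinearMap.ext fun _ => rfl⟩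
  exact ⟨hf.implicitFunction one_ne_zero hinv,
    (hf.hasStrictFDerivAt_implicitFunction one_ne_zero hinv).continuousAt,
    hf.implicitFunction_apply_self one_ne_zero hinv,
    hf.eventually_apply_eq_iff_implicitFunction one_ne_zero hinv⟩

theorem exists_implicitFunction_eval_lineMap [Finite κ] (A B : κ → MvPolynomial τ ℂ) (t₀ : ℂ)
    (x₀ : τ → ℂ) (hJ : Function.Bijective
      ((jacobianMatrix (AffineMap.lineMap A B t₀)).map (eval x₀)).mulVecLin) :
    ∃ ψ : ℂ → τ → ℂ, ContinuousAt ψ t₀ ∧ ψ t₀ = x₀ ∧ ∀ᶠ v in 𝓝 (t₀, x₀),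
      ((fun i => eval v.2 (AffineMap.lineMap A B v.1 i)) =
        fun i => eval x₀ (AffineMap.lineMap A B t₀ i)) ↔ ψ v.1 = v.2 := by
  have := Fintype.ofFinite κ
  let J := ((jacobianMatrix (AffineMap.lineMap A B t₀)).map (eval x₀)).mulVecLin
  have hf := (contDiff_eval_lineMap A B).contDiffAt (x := (t₀, x₀))
  have hfJ : HasFDerivAt (fun x i => eval x (AffineMap.lineMap A B t₀ i))
      (LinearMap.toContinuousLinearMap J) x₀ := by
    refine hasFDerivAt_pi'.mpr fun i => (hasFDerivAt_eval _ x₀).congr_fderiv ?_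
    refine ContinuousLinearMap.ext fun v => ?_
    simp [J, jacobianMatrix, Matrix.mulVec, dotProduct]
  exact exists_implicitFunction_of_bijective hf hfJ hJ

end ImplicitFunction

/-! ### Bézout's theorem -/

section Bezout

open Topology Filter

variable {ι τ : Type*} {o : τ}

theorem hyperplaneSystem_mem_polynomialFamilySubalgebra {M : Type*} [AddCommGroup M] [Module ℂ M]
    {F : M → ι → MvPolynomial τ ℂ}
    (hF : ∀ i, (fun a => F a i) ∈ polynomialFamilySubalgebra M τ) (i : Option ι) :
    (fun a => hyperplaneSystem o (F a) i) ∈ polynomialFamilySubalgebra M τ := by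
  cases i
  exacts [const_mem_polynomialFamilySubalgebra _, hF _]

/-- The system `G` defines a smooth cone meeting the hyperplane `{x o = 0}` only in the origin. When
there is one equation less than variables, this says that all projective zeros of `G` are simple
and lie in the affine chart `{x o = 1}`. -/
structure HasSimpleAffineZeros [Fintype τ] (o : τ) (G : ι → MvPolynomial τ ℂ) : Prop where
  isSmoothCone : IsSmoothCone G
  hasOnlyTrivialZero : HasOnlyTrivialZero (hyperplaneSystem o G)

/-- The zeros of `G` in the affine chart `{x o = 1}`. -/
def affineZeros (o : τ) (G : ι → MvPolynomial τ ℂ) : Set (τ → ℂ) :=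
  {x | x o = 1 ∧ ∀ i, eval x (G i) = 0}

theorem mem_affineZeros_iff_eval_hyperplaneSystem {G : ι → MvPolynomial τ ℂ} {x : τ → ℂ} :
    x ∈ affineZeros o G ↔ (fun i => eval x (hyperplaneSystem o G i)) = fun i => i.elim 1 0 := by
  simp [affineZeros, hyperplaneSystem, funext_iff, Option.forall]

theorem hyperplaneSystem_lineMap (A B : ι → MvPolynomial τ ℂ) (t : ℂ) :
    hyperplaneSystem o (AffineMap.lineMap A B t) =
      AffineMap.lineMap (hyperplaneSystem o A) (hyperplaneSystem o B) t := by
  funext i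
  cases i <;> simp [hyperplaneSystem, AffineMap.lineMap_apply_module, ← add_smul]

theorem isHomogeneous_lineMap {A B : ι → MvPolynomial τ ℂ} {e : ι → ℕ}
    (hA : ∀ i, (A i).IsHomogeneous (e i)) (hB : ∀ i, (B i).IsHomogeneous (e i)) (t : ℂ) (i : ι) :
    (AffineMap.lineMap A B t i).IsHomogeneous (e i) := by
  rw [AffineMap.lineMap_apply_module]
  exact (homogeneousSubmodule τ ℂ (e i)).add_mem (Submodule.smul_mem _ _ (hA i))
    (Submodule.smul_mem _ _ (hB i))

theorem lineMap_mem_polynomialFamilySubalgebra (A B : ι → MvPolynomial τ ℂ) (i : ι) :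
    (fun t => AffineMap.lineMap A B t i) ∈ polynomialFamilySubalgebra ℂ τ := by
  have h : (fun t => AffineMap.lineMap A B t i) =
      (fun t => LinearMap.toSpanSingleton ℂ _ (B i - A i) t) + fun _ => A i := by
    funext t
    simp [AffineMap.lineMap_apply]
  rw [h]
  exact add_mem (linearMap_mem_polynomialFamilySubalgebra _)
    (const_mem_polynomialFamilySubalgebra _)

section Chart

variable {G : ι → MvPolynomial τ ℂ} {e : ι → ℕ}

theorem inv_smul_mem_affineZeros (hG : ∀ i, (G i).IsHomogeneous (e i)) {x : τ → ℂ} (hxo : x o ≠ 0)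
    (hx : ∀ i, eval x (G i) = 0) : (x o)⁻¹ • x ∈ affineZeros o G :=
  ⟨by simp [hxo], fun i => by rw [eval_smul_of_isHomogeneous (hG i), hx i, mul_zero]⟩

variable [Fintype τ]

theorem affineZeros_eq_image_sphere (hG : ∀ i, (G i).IsHomogeneous (e i)) :
    affineZeros o G = (fun x => (x o)⁻¹ • x) ''
      {x ∈ Metric.sphere (0 : τ → ℂ) 1 | x o ≠ 0 ∧ ∀ i, eval x (G i) = 0} := by
  refine subset_antisymm ?_ ?_
  · rintro x ⟨hxo, hx⟩
    have hx0 : x ≠ 0 := fun h => by simp [h] at hxo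
    have hnorm : (‖x‖ : ℂ) ≠ 0 := by simpa using hx0
    refine ⟨(‖x‖ : ℂ)⁻¹ • x, ⟨by simp [norm_smul, hx0], by simp [hxo, hx0], fun i => ?_⟩, ?_⟩
    · rw [eval_smul_of_isHomogeneous (hG i), hx i, mul_zero]
    · simp [hxo, smul_smul, hnorm]
  · rintro _ ⟨x, ⟨-, hxo, hx⟩, rfl⟩
    exact inv_smul_mem_affineZeros hG hxo hx

theorem HasSimpleAffineZeros.apply_ne_zero (h : HasSimpleAffineZeros o G) {x : τ → ℂ}
    (hx : x ≠ 0) (hzero : ∀ i, eval x (G i) = 0) : x o ≠ 0 := fun hxo =>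
  hx (h.hasOnlyTrivialZero x (forall_eval_hyperplaneSystem_eq_zero_iff.mpr ⟨hxo, hzero⟩))

theorem HasSimpleAffineZeros.isCompact_affineZeros (hG : ∀ i, (G i).IsHomogeneous (e i))
    (h : HasSimpleAffineZeros o G) : IsCompact (affineZeros o G) := by
  have hne {x : τ → ℂ} (hx : x ∈ Metric.sphere 0 1) : x ≠ 0 := fun h0 => by simp [h0] at hx
  have hsphere : {x ∈ Metric.sphere (0 : τ → ℂ) 1 | x o ≠ 0 ∧ ∀ i, eval x (G i) = 0} =
      Metric.sphere 0 1 ∩ ⋂ i, {x | eval x (G i) = 0} := by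
    ext x
    simp only [Set.mem_ofPred_eq, Set.mem_inter_iff, Set.mem_iInter]
    exact ⟨fun hx => ⟨hx.1, hx.2.2⟩, fun hx => ⟨hx.1, h.apply_ne_zero (hne hx.1) hx.2, hx.2⟩⟩
  rw [affineZeros_eq_image_sphere hG]
  refine IsCompact.image_of_continuousOn ?_ fun x hx =>
    (((continuous_apply o).continuousAt.inv₀ hx.2.1).smul continuousAt_id).continuousWithinAt
  rw [hsphere]
  exact (isCompact_sphere _ _).inter_right
    (isClosed_iInter fun i => isClosed_eq (continuous_eval _) continuous_const)

theorem jacobianMatrix_mulVec_self_eq_zero (hG : ∀ i, (G i).IsHomogeneous (e i)) {x : τ → ℂ}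
    (hzero : ∀ i, eval x (G i) = 0) : ((jacobianMatrix G).map (eval x)).mulVec x = 0 := by
  funext i
  have h := congrArg (eval x) (hG i).sum_X_mul_pderiv
  simpa [hzero i, jacobianMatrix, Matrix.mulVec, dotProduct, mul_comm] using h

theorem HasSimpleAffineZeros.bijective_mulVecLin [Fintype ι]
    (hG : ∀ i, (G i).IsHomogeneous (e i)) (h : HasSimpleAffineZeros o G)
    (hcard : Fintype.card ι + 1 = Fintype.card τ) {x : τ → ℂ} (hx : x ≠ 0)
    (hzero : ∀ i, eval x (G i) = 0) :
    Function.Bijective ((jacobianMatrix (hyperplaneSystem o G)).map (eval x)).mulVecLin := by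
  classical
  have hsurj : Function.Surjective
      ((jacobianMatrix (hyperplaneSystem o G)).map (eval x)).mulVecLin := by
    intro y
    obtain ⟨v, hv⟩ := h.isSmoothCone x hx hzero fun i => y (some i)
    have hxo := h.apply_ne_zero hx hzero
    refine ⟨v + ((y none - v o) / x o) • x, funext fun i => ?_⟩
    cases i with
    | none =>
      simp [jacobianMatrix, hyperplaneSystem, Matrix.mulVec, dotProduct, pderiv_X,
        Pi.single_apply, apply_ite, hxo]
    | some i =>
      have hsome (w : τ → ℂ) : ((jacobianMatrix (hyperplaneSystem o G)).map (eval x)).mulVec w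
          (some i) = ((jacobianMatrix G).map (eval x)).mulVec w i := rfl
      rw [Matrix.mulVecLin_apply, hsome, Matrix.mulVec_add, Matrix.mulVec_smul,
        jacobianMatrix_mulVec_self_eq_zero hG hzero, smul_zero, add_zero]
      exact congrFun hv i
  refine ⟨(LinearMap.injective_iff_surjective_of_finrank_eq_finrank ?_).mpr hsurj, hsurj⟩
  simp [hcard]

end Chart

section Deformation

variable [Fintype τ] {A B : ι → MvPolynomial τ ℂ} {e : ι → ℕ} {t₀ : ℂ}

theorem eventually_affineZeros_lineMap_subset (hA : ∀ i, (A i).IsHomogeneous (e i))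
    (hB : ∀ i, (B i).IsHomogeneous (e i))
    (h : HasSimpleAffineZeros o (AffineMap.lineMap A B t₀)) {W : Set (τ → ℂ)} (hW : IsOpen W)
    (hZW : affineZeros o (AffineMap.lineMap A B t₀) ⊆ W) :
    ∀ᶠ t in 𝓝 t₀, affineZeros o (AffineMap.lineMap A B t) ⊆ W := by
  have hG := isHomogeneous_lineMap hA hB
  have hsphere : ∀ᶠ t in 𝓝 t₀, ∀ x ∈ Metric.sphere (0 : τ → ℂ) 1,
      (∀ i, eval x (AffineMap.lineMap A B t i) = 0) → (x o)⁻¹ • x ∈ W := by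
    refine (isCompact_sphere _ _).eventually_forall_of_forall_eventually fun x hx => ?_
    have hx0 : x ≠ 0 := fun h0 => by simp [h0] at hx
    by_cases hzero : ∀ i, eval x (AffineMap.lineMap A B t₀ i) = 0
    · have hxo := h.apply_ne_zero hx0 hzero
      have hcont : ContinuousAt (fun x : τ → ℂ => (x o)⁻¹ • x) x :=
        ((continuous_apply o).continuousAt.inv₀ hxo).smul continuousAt_id
      have hxW : ∀ᶠ y in 𝓝 x, (y o)⁻¹ • y ∈ W :=
        hcont.eventually_mem (hW.mem_nhds (hZW (inv_smul_mem_affineZeros (hG t₀) hxo hzero)))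
      filter_upwards [(continuous_snd.tendsto (t₀, x)).eventually hxW] with v hv _
      exact hv
    · obtain ⟨i, hi⟩ := not_forall.mp hzero
      have hcont : Continuous fun v : ℂ × (τ → ℂ) => eval v.2 (AffineMap.lineMap A B v.1 i) := by
        simp only [eval_lineMap_apply]
        have heval (p : MvPolynomial τ ℂ) : Continuous fun v : ℂ × (τ → ℂ) => eval v.2 p :=
          (continuous_eval p).comp continuous_snd
        exact ((continuous_const.sub continuous_fst).mul (heval _)).add
          (continuous_fst.mul (heval _))
      filter_upwards [(hcont.continuousAt (x := (t₀, x))).eventually_ne hi] with v hv hv'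
      exact absurd (hv' i) hv
  filter_upwards [hsphere] with t ht
  rw [affineZeros_eq_image_sphere (hG t)]
  rintro _ ⟨x, ⟨hx, -, hzero⟩, rfl⟩
  exact ht x hx hzero

theorem isZariskiOpen_setOf_hasSimpleAffineZeros [Finite ι] {M : Type*} [AddCommGroup M]
    [Module ℂ M] {F : M → ι → MvPolynomial τ ℂ} (hF : ∀ a i, (F a i).IsHomogeneous (e i))
    (hpoly : ∀ i, (fun a => F a i) ∈ polynomialFamilySubalgebra M τ) :
    IsZariskiOpen {a | HasSimpleAffineZeros o (F a)} := by
  have h := (isZariskiOpen_setOf_isSmoothCone hF hpoly).inter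
    (isZariskiOpen_setOf_hasOnlyTrivialZero
      (fun a => isHomogeneous_hyperplaneSystem (o := o) (hF a))
      (hyperplaneSystem_mem_polynomialFamilySubalgebra hpoly))
  convert h using 1
  exact Set.ext fun a => ⟨fun h => ⟨h.1, h.2⟩, fun h => ⟨h.1, h.2⟩⟩

variable [Fintype ι]

theorem exists_isOpen_eventually_affineZeros_inter_eq_singleton
    (hA : ∀ i, (A i).IsHomogeneous (e i)) (hB : ∀ i, (B i).IsHomogeneous (e i))
    (hcard : Fintype.card ι + 1 = Fintype.card τ)
    (h : HasSimpleAffineZeros o (AffineMap.lineMap A B t₀)) :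
    ∀ x ∈ affineZeros o (AffineMap.lineMap A B t₀), ∀ W ∈ 𝓝 x, ∃ V ⊆ W, IsOpen V ∧ x ∈ V ∧
      ∀ᶠ t in 𝓝 t₀, ∃ x', affineZeros o (AffineMap.lineMap A B t) ∩ V = {x'} := by
  intro x hx W hW
  have hx0 : x ≠ 0 := fun h0 => by simpa [h0] using hx.1
  have hbij := h.bijective_mulVecLin (isHomogeneous_lineMap hA hB t₀) hcard hx0 hx.2
  rw [hyperplaneSystem_lineMap] at hbij
  obtain ⟨ψ, hψ, hψ₀, hiff⟩ := exists_implicitFunction_eval_lineMap _ _ _ _ hbij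
  refine exists_isOpen_eventually_inter_eq_singleton hψ hψ₀ ?_ hW
  rw [mem_affineZeros_iff_eval_hyperplaneSystem, hyperplaneSystem_lineMap] at hx
  filter_upwards [hiff] with v hv
  rw [← hv, hx, mem_affineZeros_iff_eval_hyperplaneSystem, hyperplaneSystem_lineMap]

theorem HasSimpleAffineZeros.finite_affineZeros {G : ι → MvPolynomial τ ℂ}
    (hG : ∀ i, (G i).IsHomogeneous (e i)) (hcard : Fintype.card ι + 1 = Fintype.card τ)
    (h : HasSimpleAffineZeros o G) : (affineZeros o G).Finite := by
  have hsimple := exists_isOpen_eventually_affineZeros_inter_eq_singleton hG hG hcard (t₀ := 0)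
    (by simpa using h)
  have hfin := finite_of_isCompact_of_eventually_inter_eq_singleton
    (Z := fun t => affineZeros o (AffineMap.lineMap G G t)) hsimple
  simp only [AffineMap.lineMap_same_apply] at hfin
  exact hfin (h.isCompact_affineZeros hG)

theorem eventually_ncard_affineZeros_lineMap_eq (hA : ∀ i, (A i).IsHomogeneous (e i))
    (hB : ∀ i, (B i).IsHomogeneous (e i)) (hcard : Fintype.card ι + 1 = Fintype.card τ)
    (h : HasSimpleAffineZeros o (AffineMap.lineMap A B t₀)) :
    ∀ᶠ t in 𝓝 t₀, (affineZeros o (AffineMap.lineMap A B t)).ncard =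
      (affineZeros o (AffineMap.lineMap A B t₀)).ncard :=
  eventually_ncard_eq_of_eventually_inter_eq_singleton
    (exists_isOpen_eventually_affineZeros_inter_eq_singleton hA hB hcard h)
    (h.finite_affineZeros (isHomogeneous_lineMap hA hB t₀) hcard)
    fun _ hW hZW => eventually_affineZeros_lineMap_subset hA hB h hW hZW

theorem HasSimpleAffineZeros.ncard_affineZeros_eq (hA : ∀ i, (A i).IsHomogeneous (e i))
    (hB : ∀ i, (B i).IsHomogeneous (e i)) (hcard : Fintype.card ι + 1 = Fintype.card τ)
    (h : HasSimpleAffineZeros o A) (h' : HasSimpleAffineZeros o B) :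
    (affineZeros o A).ncard = (affineZeros o B).ncard := by
  let S : Set ℂ := {t | HasSimpleAffineZeros o (AffineMap.lineMap A B t)}
  have hopen : IsZariskiOpen S := isZariskiOpen_setOf_hasSimpleAffineZeros
    (isHomogeneous_lineMap hA hB) (lineMap_mem_polynomialFamilySubalgebra A B)
  have hS₀ : 0 ∈ S := by simpa [S] using h
  have hS₁ : 1 ∈ S := by simpa [S] using h'
  have hfin : Sᶜ.Finite := by
    refine (hopen.finite_setOf_lineMap_notMem (a := 0) (b := 1) (t₀ := 0) (by simpa)).subset ?_
    exact fun t ht => by simpa [AffineMap.lineMap_apply] using ht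
  have hconn : IsPreconnected S := by
    simpa using (hfin.countable.isConnected_compl_of_one_lt_rank (by simp)).isPreconnected
  have hcont : ContinuousOn (fun t => (affineZeros o (AffineMap.lineMap A B t)).ncard) S :=
    fun t ht => (continuousAt_const.congr
      ((eventually_ncard_affineZeros_lineMap_eq hA hB hcard ht).mono
        fun _ h => h.symm)).continuousWithinAt
  simpa using hconn.constant hcont hS₀ hS₁

end Deformation

end Bezout

section Binomial

variable {ι τ : Type*} [Fintype τ] [DecidableEq τ]

/-- The system of equations `X (ε (some i)) ^ e i = b i * X (ε none) ^ e i`, whose zeros in the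
chart `{x (ε none) = 1}` are the families of `e i`-th roots of the numbers `b i`. -/
def binomialSystem (ε : Option ι ≃ τ) (b : ι → ℂ) (e : ι → ℕ) : ι → MvPolynomial τ ℂ :=
  fun i => diagonalForm (Pi.single (ε (some i)) 1 - Pi.single (ε none) (b i)) (e i)

variable (ε : Option ι ≃ τ) {b : ι → ℂ} {e : ι → ℕ}

theorem eval_binomialSystem (b : ι → ℂ) (e : ι → ℕ) (x : τ → ℂ) (i : ι) :
    eval x (binomialSystem ε b e i) = x (ε (some i)) ^ e i - b i * x (ε none) ^ e i := by
  simp [binomialSystem, eval_diagonalForm, sub_mul, Finset.sum_sub_distrib, Pi.single_apply]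

theorem jacobianMatrix_binomialSystem_mulVec (b : ι → ℂ) (e : ι → ℕ) (x v : τ → ℂ)
    (hv : v (ε none) = 0) (i : ι) :
    ((jacobianMatrix (binomialSystem ε b e)).map (eval x)).mulVec v i =
      e i * x (ε (some i)) ^ (e i - 1) * v (ε (some i)) := by
  simp only [jacobianMatrix, binomialSystem, pderiv_diagonalForm, Matrix.mulVec, dotProduct,
    Matrix.map_apply, Matrix.of_apply, map_mul, map_pow, eval_C, eval_X, Pi.sub_apply,
    mul_sub, sub_mul, Finset.sum_sub_distrib]
  simp [Pi.single_apply, hv]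

theorem hasSimpleAffineZeros_binomialSystem (he : ∀ i, e i ≠ 0) (hb : ∀ i, b i = 0 → e i = 1) :
    HasSimpleAffineZeros (ε none) (binomialSystem ε b e) where
  isSmoothCone x hx hzero y := by
    simp only [eval_binomialSystem, sub_eq_zero] at hzero
    have hxo : x (ε none) ≠ 0 := fun h => hx <| funext fun j => by
      obtain ⟨_ | i, rfl⟩ := ε.surjective j
      · exact h
      · exact eq_zero_of_pow_eq_zero ((hzero i).trans (by simp [h, he i]))
    have hpivot (i : ι) : (e i * x (ε (some i)) ^ (e i - 1) : ℂ) ≠ 0 := by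
      refine mul_ne_zero (Nat.cast_ne_zero.mpr (he i)) ?_
      by_cases hbi : b i = 0
      · simp [hb i hbi]
      · refine pow_ne_zero _ fun h => mul_ne_zero hbi (pow_ne_zero (e i) hxo) ?_
        rw [← hzero i, h, zero_pow (he i)]
    refine ⟨fun j => (ε.symm j).elim 0 fun i => y i / (e i * x (ε (some i)) ^ (e i - 1)),
      funext fun i => ?_⟩
    rw [Matrix.mulVecLin_apply, jacobianMatrix_binomialSystem_mulVec ε b e x _ (by simp)]
    simpa using mul_div_cancel₀ (y i) (hpivot i)
  hasOnlyTrivialZero x hzero := by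
    obtain ⟨hxo, hzero⟩ := forall_eval_hyperplaneSystem_eq_zero_iff.mp hzero
    funext j
    obtain ⟨_ | i, rfl⟩ := ε.surjective j
    · exact hxo
    · have h := hzero i
      rw [eval_binomialSystem, hxo, zero_pow (he i), mul_zero, sub_zero] at h
      exact eq_zero_of_pow_eq_zero h

theorem card_toFinset_nthRoots {k : ℕ} {z : ℂ} (hk : k ≠ 0) (hz : z = 0 → k = 1) :
    (Polynomial.nthRoots k z).toFinset.card = k := by
  by_cases h0 : z = 0
  · simp [h0, hz h0, Polynomial.nthRoots]
  · rw [Multiset.toFinset_card_of_nodup ((Complex.isPrimitiveRoot_exp k hk).nthRoots_nodup h0),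
      (Complex.isPrimitiveRoot_exp k hk).card_nthRoots,
      if_pos (IsAlgClosed.exists_pow_nat_eq z hk.bot_lt)]

theorem ncard_affineZeros_binomialSystem [Fintype ι] (he : ∀ i, e i ≠ 0)
    (hb : ∀ i, b i = 0 → e i = 1) :
    (affineZeros (ε none) (binomialSystem ε b e)).ncard = ∏ i, e i := by
  classical
  have himage : (fun x i => x (ε (some i))) '' affineZeros (ε none) (binomialSystem ε b e) =
      Fintype.piFinset fun i => (Polynomial.nthRoots (e i) (b i)).toFinset := by
    ext z
    simp only [affineZeros, eval_binomialSystem, sub_eq_zero, Finset.mem_coe,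
      Fintype.mem_piFinset, Multiset.mem_toFinset, Polynomial.mem_nthRoots (he _).bot_lt]
    constructor
    · rintro ⟨x, ⟨hxo, hx⟩, rfl⟩ i
      simpa [hxo] using hx i
    · exact fun hz => ⟨fun j => (ε.symm j).elim 1 z, ⟨by simp, by simpa using hz⟩, by simp⟩
  have hinj : Set.InjOn (fun x i => x (ε (some i)))
      (affineZeros (ε none) (binomialSystem ε b e)) := by
    rintro x ⟨hxo, -⟩ y ⟨hyo, -⟩ hxy
    funext j
    obtain ⟨_ | i, rfl⟩ := ε.surjective j
    exacts [hxo.trans hyo.symm, congrFun hxy i]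
  rw [← hinj.ncard_image, himage, Set.ncard_coe_finset, Fintype.card_piFinset]
  exact Finset.prod_congr rfl fun i _ => card_toFinset_nthRoots (he i) (hb i)

end Binomial

section ProjectiveZeros

theorem exists_equiv_apply_eq {α β : Type*} [Fintype α] [Fintype β]
    (h : Fintype.card α = Fintype.card β) (a : α) (b : β) : ∃ ε : α ≃ β, ε a = b := by
  classical
  exact ⟨(Fintype.equivOfCardEq h).trans (Equiv.swap (Fintype.equivOfCardEq h a) b), by simp⟩

variable {ι τ : Type*} {o : τ} {G : ι → MvPolynomial τ ℂ} {e : ι → ℕ}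

/-- The zero locus of `G` in projective space; it has its geometric meaning when the members of `G`
are homogeneous, since it is defined through arbitrarily chosen representatives. -/
def projectiveZeros (G : ι → MvPolynomial τ ℂ) : Set (Projectivization ℂ (τ → ℂ)) :=
  {p | ∀ i, eval p.rep (G i) = 0}

variable [Fintype τ]

theorem HasSimpleAffineZeros.bijOn_projectiveZeros (hG : ∀ i, (G i).IsHomogeneous (e i))
    (h : HasSimpleAffineZeros o G) :
    Set.BijOn (fun p => (p.rep o)⁻¹ • p.rep) (projectiveZeros G) (affineZeros o G) := by
  have hrep (p : Projectivization ℂ (τ → ℂ)) (hp : p ∈ projectiveZeros G) : p.rep o ≠ 0 :=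
    h.apply_ne_zero p.rep_nonzero hp
  refine ⟨fun p hp => inv_smul_mem_affineZeros hG (hrep p hp) hp, fun p hp q _ hpq => ?_, ?_⟩
  · rw [← p.mk_rep, ← q.mk_rep, Projectivization.mk_eq_mk_iff']
    refine ⟨p.rep o * (q.rep o)⁻¹, ?_⟩
    rw [mul_smul, ← show _ = (q.rep o)⁻¹ • q.rep from hpq, smul_inv_smul₀ (hrep p hp)]
  · rintro x ⟨hxo, hx⟩
    have hx0 : x ≠ 0 := fun h0 => by simp [h0] at hxo
    obtain ⟨a, ha⟩ := Projectivization.exists_smul_eq_mk_rep ℂ x hx0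
    refine ⟨Projectivization.mk ℂ x hx0, fun i => ?_, ?_⟩
    · rw [← ha, Units.smul_def, eval_smul_of_isHomogeneous (hG i), hx i, mul_zero]
    · simp [← ha, Units.smul_def, hxo, smul_smul]

theorem HasSimpleAffineZeros.finite_projectiveZeros [Fintype ι]
    (hG : ∀ i, (G i).IsHomogeneous (e i)) (hcard : Fintype.card ι + 1 = Fintype.card τ)
    (h : HasSimpleAffineZeros o G) : (projectiveZeros G).Finite :=
  (h.bijOn_projectiveZeros hG).finite_iff_finite.mpr (h.finite_affineZeros hG hcard)

theorem HasSimpleAffineZeros.ncard_projectiveZeros [Fintype ι]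
    (hG : ∀ i, (G i).IsHomogeneous (e i)) (he : ∀ i, e i ≠ 0)
    (hcard : Fintype.card ι + 1 = Fintype.card τ) (h : HasSimpleAffineZeros o G) :
    (projectiveZeros G).ncard = ∏ i, e i := by
  classical
  obtain ⟨ε, rfl⟩ : ∃ ε : Option ι ≃ τ, ε none = o :=
    exists_equiv_apply_eq (by simpa using hcard) _ _
  have hbinomial : ∀ i, (binomialSystem ε 1 e i).IsHomogeneous (e i) := fun i =>
    isHomogeneous_diagonalForm _ _
  rw [(h.bijOn_projectiveZeros hG).ncard_eq,
    h.ncard_affineZeros_eq hG hbinomial hcard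
      (hasSimpleAffineZeros_binomialSystem ε he (by simp)),
    ncard_affineZeros_binomialSystem ε he (by simp)]

end ProjectiveZeros

/-! ### Dimension -/

section AlgDim

variable {σ : Type*}

theorem isAlgSet_zeroLocus (I : Ideal (MvPolynomial σ ℂ)) : IsAlgSet (zeroLocus ℂ I) :=
  ⟨I, rfl⟩

theorem IsAlgSet.zeroLocus_vanishingIdeal {T : Set (σ → ℂ)} (hT : IsAlgSet T) :
    zeroLocus ℂ (vanishingIdeal ℂ T) = T := by
  obtain ⟨S, rfl⟩ := hT
  exact (zeroLocus_vanishingIdeal_le _).antisymm' fun x hx p hp => hx p fun y hy => hy p hp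

theorem AlgIrreducible.isPrime_vanishingIdeal {T : Set (σ → ℂ)} (hT : AlgIrreducible T) :
    (vanishingIdeal ℂ T).IsPrime := by
  obtain ⟨⟨x, hx⟩, hirr⟩ := hT
  refine ⟨fun h => ?_, fun {p q} hpq => ?_⟩
  · simpa using (Ideal.eq_top_iff_one _).mp h x hx
  · have hcover : T ⊆ {y | ∀ r ∈ ({p} : Set (MvPolynomial σ ℂ)), eval y r = 0} ∪
        {y | ∀ r ∈ ({q} : Set (MvPolynomial σ ℂ)), eval y r = 0} := fun y hy => by
      have hy' : eval y (p * q) = 0 := hpq y hy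
      simpa using hy'
    exact (hirr _ _ ⟨_, rfl⟩ ⟨_, rfl⟩ hcover).imp (fun h y hy => h hy p rfl)
      fun h y hy => h hy q rfl

theorem algIrreducible_zeroLocus [Finite σ] (P : Ideal (MvPolynomial σ ℂ)) [hP : P.IsPrime] :
    AlgIrreducible (zeroLocus ℂ P) := by
  have hPvan := IsPrime.vanishingIdeal_zeroLocus (K := ℂ) P
  refine ⟨Set.nonempty_iff_ne_empty.mpr fun h => hP.ne_top ?_, fun A B hA hB hAB => ?_⟩
  · rw [← hPvan, h, vanishingIdeal_empty]
  · rw [← hA.zeroLocus_vanishingIdeal, ← hB.zeroLocus_vanishingIdeal] at hAB ⊢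
    have hle : vanishingIdeal ℂ A * vanishingIdeal ℂ B ≤ P := by
      rw [← hPvan, Ideal.mul_le]
      intro p hp q hq x hx
      rcases hAB hx with h | h
      · rw [map_mul, h p hp, zero_mul]
      · rw [map_mul, h q hq, mul_zero]
    exact (hP.mul_le.mp hle).imp (fun h => zeroLocus_anti_mono h) fun h => zeroLocus_anti_mono h

/-- The order-reversing bijection between the irreducible algebraic subsets of `V(I)` and the prime
ideals containing `I`. -/
def irreducibleSubsetsOrderIso [Finite σ] (I : Ideal (MvPolynomial σ ℂ)) :
    {T : Set (σ → ℂ) // IsAlgSet T ∧ AlgIrreducible T ∧ T ⊆ zeroLocus ℂ I}ᵒᵈ ≃o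
      PrimeSpectrum.zeroLocus (I : Set (MvPolynomial σ ℂ)) where
  toFun T := ⟨⟨vanishingIdeal ℂ (OrderDual.ofDual T).1,
      (OrderDual.ofDual T).2.2.1.isPrime_vanishingIdeal⟩,
    le_zeroLocus_iff_le_vanishingIdeal.mp (OrderDual.ofDual T).2.2.2⟩
  invFun P := OrderDual.toDual ⟨zeroLocus ℂ P.1.asIdeal, isAlgSet_zeroLocus _,
    algIrreducible_zeroLocus _, zeroLocus_anti_mono P.2⟩
  left_inv T := Subtype.ext (OrderDual.ofDual T).2.1.zeroLocus_vanishingIdeal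
  right_inv P := Subtype.ext (PrimeSpectrum.ext (IsPrime.vanishingIdeal_zeroLocus P.1.asIdeal))
  map_rel_iff' {T T'} := by
    change vanishingIdeal ℂ (OrderDual.ofDual T).1 ≤ vanishingIdeal ℂ (OrderDual.ofDual T').1 ↔
      (OrderDual.ofDual T').1 ≤ (OrderDual.ofDual T).1
    refine ⟨fun h => ?_, fun h => vanishingIdeal_anti_mono h⟩
    have hle := zeroLocus_anti_mono (K := ℂ) h
    rwa [(OrderDual.ofDual T).2.1.zeroLocus_vanishingIdeal,
      (OrderDual.ofDual T').2.1.zeroLocus_vanishingIdeal] at hle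

theorem algDim_zeroLocus [Finite σ] (I : Ideal (MvPolynomial σ ℂ)) :
    algDim (zeroLocus ℂ I) = ringKrullDim (MvPolynomial σ ℂ ⧸ I) := by
  rw [ringKrullDim_quotient, algDim, ← Order.krullDim_orderDual]
  exact Order.krullDim_eq_of_orderIso (irreducibleSubsetsOrderIso I)

end AlgDim

section KrullDim

theorem ringKrullDim_le_of_isIntegral {A B : Type*} [CommRing A] [CommRing B] [Algebra A B]
    [Algebra.IsIntegral A B] : ringKrullDim B ≤ ringKrullDim A :=
  Order.krullDim_le_of_strictMono (fun P => ⟨P.asIdeal.comap (algebraMap A B), inferInstance⟩)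
    fun P Q h => Ideal.IsIntegral.comap_lt_comap (R := A) (show P.asIdeal < Q.asIdeal from h)

theorem ringKrullDim_mvPolynomial {K σ : Type*} [Field K] [Fintype σ] :
    ringKrullDim (MvPolynomial σ K) = Fintype.card σ := by
  simp [MvPolynomial.ringKrullDim_of_isNoetherianRing, ringKrullDim_eq_zero_of_field]

variable {K σ : Type*} [Field K]

/-- The automorphism of the polynomial ring induced by the translation by `a`. -/
def translateEquiv (a : σ → K) : MvPolynomial σ K ≃ₐ[K] MvPolynomial σ K :=
  AlgEquiv.ofAlgHom (aeval fun i => X i + C (a i)) (aeval fun i => X i - C (a i))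
    (by ext1 i; simp [← algebraMap_eq]) (by ext1 i; simp [← algebraMap_eq])

theorem comap_translateEquiv_vanishingIdeal_zero (a : σ → K) :
    (vanishingIdeal K {(0 : σ → K)}).comap (translateEquiv a).toRingEquiv =
      vanishingIdeal K {a} := by
  have haeval : (aeval (0 : σ → K)).comp (translateEquiv a : MvPolynomial σ K →ₐ[K] _) =
      aeval a := by
    ext1 i
    simp [translateEquiv]
  ext p
  rw [Ideal.mem_comap, mem_vanishingIdeal_singleton_iff, mem_vanishingIdeal_singleton_iff, ← haeval]
  rfl

theorem card_le_height_vanishingIdeal_zero [IsAlgClosed K] [Fintype σ] :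
    (Fintype.card σ : WithBot ℕ∞) ≤ (vanishingIdeal K {(0 : σ → K)}).height := by
  rw [← ringKrullDim_mvPolynomial (K := K), ringKrullDim_le_iff_isMaximal_height_le]
  intro m hm
  obtain ⟨a, rfl⟩ := isMaximal_iff_eq_vanishingIdeal_singleton.mp hm
  rw [← comap_translateEquiv_vanishingIdeal_zero a, RingEquiv.height_comap]

variable {ι κ : Type*} {F : ι → MvPolynomial σ K} {y : κ → MvPolynomial σ K} {e : ι → ℕ}
  {r : κ → ℕ}

theorem card_le_ringKrullDim_quotient_span_add_card [IsAlgClosed K] [Fintype σ] [Fintype ι]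
    (hF : ∀ i, eval 0 (F i) = 0) :
    (Fintype.card σ : WithBot ℕ∞) ≤
      ringKrullDim (MvPolynomial σ K ⧸ Ideal.span (Set.range F)) + Fintype.card ι := by
  have hsub : Set.range F ⊆ (vanishingIdeal K {(0 : σ → K)} : Ideal (MvPolynomial σ K)) := by
    rintro _ ⟨i, rfl⟩
    exact (mem_vanishingIdeal_singleton_iff _ _).mpr (hF i)
  have : (vanishingIdeal K {(0 : σ → K)}).IsPrime :=
    (isMaximal_iff_eq_vanishingIdeal_singleton.mpr ⟨0, rfl⟩).isPrime
  have hcard : (Set.range F).encard ≤ Fintype.card ι := by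
    simpa [← Set.image_univ] using Set.encard_image_le F Set.univ
  calc (Fintype.card σ : WithBot ℕ∞) ≤ (vanishingIdeal K {(0 : σ → K)}).height :=
        card_le_height_vanishingIdeal_zero
    _ ≤ _ := Ideal.height_le_ringKrullDim_quotient_add_encard _ hsub
    _ ≤ _ := by gcongr; exact_mod_cast hcard

variable [IsAlgClosed K] [Finite σ] [Finite ι]

-- A polynomial of large degree lies in the ideal generated by `F` and `y`, with coefficients of
-- smaller degree at the members of `y`.
theorem HasOnlyTrivialZero.exists_forall_submodule_eq_top [Finite κ]
    (hF : ∀ i, (F i).IsHomogeneous (e i)) (hy : ∀ j, (y j).IsHomogeneous (r j)) (hr : ∀ j, r j ≠ 0)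
    (h : HasOnlyTrivialZero (Sum.elim F y)) :
    ∃ N : ℕ, ∀ W : Submodule K (MvPolynomial σ K),
      (∀ s : σ →₀ ℕ, s.degree < N → monomial s 1 ∈ W) → (∀ i g, g * F i ∈ W) →
      (∀ j, ∀ p ∈ W, p * y j ∈ W) → W = ⊤ := by
  have := Fintype.ofFinite ι
  have := Fintype.ofFinite κ
  obtain ⟨N, hN⟩ := h.exists_forall_monomial_mem_span
  refine ⟨N, fun W hmon hWF hWy => ?_⟩
  have hhom (D : ℕ) : ∀ p : MvPolynomial σ K, p.IsHomogeneous D → p ∈ W := by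
    induction D using Nat.strong_induction_on with
    | _ D ih =>
      intro p hp
      have hdeg {s : σ →₀ ℕ} (hs : s ∈ p.support) : s.degree = D :=
        (hp.degree_eq_sum_deg_support hs).symm
      have hsum : p = ∑ s ∈ p.support, coeff s p • monomial s 1 := by
        simp [smul_monomial]
      by_cases hD : D < N
      · rw [hsum]
        exact sum_mem fun s hs => W.smul_mem _ (hmon s (hdeg hs ▸ hD))
      · have hpspan : p ∈ Ideal.span (Set.range (Sum.elim F y)) := by
          rw [hsum]
          exact sum_mem fun s hs =>
            Submodule.smul_of_tower_mem _ _ (hN s (hdeg hs ▸ not_lt.mp hD))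
        obtain ⟨g, hg, hg₀, rfl⟩ := exists_isHomogeneous_sum_mul_eq
          (F := Sum.elim F y) (e := Sum.elim e r) (Sum.rec hF hy) hp hpspan
        rw [Fintype.sum_sum_type]
        refine add_mem (sum_mem fun i _ => hWF i _) (sum_mem fun j _ => hWy j _ ?_)
        rcases le_or_gt (r j) D with hrD | hrD
        · exact ih _ (Nat.sub_lt_self (hr j).bot_lt hrD) _ (hg (.inr j) hrD)
        · rw [hg₀ (.inr j) hrD]
          exact W.zero_mem
  refine eq_top_iff.mpr fun p _ => ?_
  rw [← sum_homogeneousComponent p]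
  exact sum_mem fun D _ => hhom D _ (homogeneousComponent_isHomogeneous _ _)

theorem HasOnlyTrivialZero.finite_aeval_mk [Finite κ] (hF : ∀ i, (F i).IsHomogeneous (e i))
    (hy : ∀ j, (y j).IsHomogeneous (r j)) (hr : ∀ j, r j ≠ 0)
    (h : HasOnlyTrivialZero (Sum.elim F y)) :
    (aeval (R := K) fun j => Ideal.Quotient.mkₐ K (Ideal.span (Set.range F)) (y j)).Finite := by
  obtain ⟨N, hN⟩ := h.exists_forall_submodule_eq_top hF hy hr
  set π := Ideal.Quotient.mkₐ K (Ideal.span (Set.range F))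
  set φ : MvPolynomial κ K →ₐ[K] _ := aeval fun j => π (y j)
  algebraize [φ.toRingHom]
  let W := Submodule.span (MvPolynomial κ K) ((fun s => π (monomial s 1)) '' {s | s.degree < N})
  have hW : (W.restrictScalars K).comap π.toLinearMap = ⊤ := by
    refine hN _ (fun s hs => Submodule.subset_span ⟨s, hs, rfl⟩) (fun i g => ?_) fun j p hp => ?_
    · have hzero : π (g * F i) = 0 := Ideal.Quotient.eq_zero_iff_mem.mpr
        (Ideal.mul_mem_left _ _ (Ideal.subset_span ⟨i, rfl⟩))
      simp [hzero]
    · have hsmul : π (p * y j) = (X j : MvPolynomial κ K) • π p := by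
        have hX : algebraMap (MvPolynomial κ K) _ (X j) = π (y j) := aeval_X _ j
        rw [Algebra.smul_def, hX, map_mul, mul_comm]
      simpa [hsmul] using W.smul_mem (X j) hp
  have hfin : {s : σ →₀ ℕ | s.degree < N}.Finite :=
    (Finsupp.finite_of_degree_le N).subset fun s (hs : s.degree < N) => hs.le
  refine ⟨⟨(hfin.image fun s => π (monomial s 1)).toFinset, ?_⟩⟩
  rw [Set.Finite.coe_toFinset]
  refine eq_top_iff.mpr fun b _ => ?_
  obtain ⟨p, rfl⟩ := Ideal.Quotient.mkₐ_surjective K _ b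
  exact (hW ▸ Submodule.mem_top : p ∈ (W.restrictScalars K).comap π.toLinearMap)

theorem HasOnlyTrivialZero.ringKrullDim_quotient_span_le [Fintype κ]
    (hF : ∀ i, (F i).IsHomogeneous (e i)) (hy : ∀ j, (y j).IsHomogeneous (r j)) (hr : ∀ j, r j ≠ 0)
    (h : HasOnlyTrivialZero (Sum.elim F y)) :
    ringKrullDim (MvPolynomial σ K ⧸ Ideal.span (Set.range F)) ≤ Fintype.card κ := by
  have hfin := h.finite_aeval_mk hF hy hr
  algebraize [(aeval (R := K) fun j =>
    Ideal.Quotient.mkₐ K (Ideal.span (Set.range F)) (y j)).toRingHom]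
  have : Module.Finite (MvPolynomial κ K) (MvPolynomial σ K ⧸ Ideal.span (Set.range F)) := hfin
  rw [← ringKrullDim_mvPolynomial (K := K)]
  exact ringKrullDim_le_of_isIntegral

end KrullDim

theorem HasOnlyTrivialZero.algDim_eq_card {σ ι κ : Type*} [Fintype σ] [Fintype ι] [Fintype κ]
    {F : ι → MvPolynomial σ ℂ} {y : κ → MvPolynomial σ ℂ} {e : ι → ℕ} {r : κ → ℕ}
    (hF : ∀ i, (F i).IsHomogeneous (e i)) (he : ∀ i, e i ≠ 0)
    (hy : ∀ j, (y j).IsHomogeneous (r j)) (hr : ∀ j, r j ≠ 0)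
    (h : HasOnlyTrivialZero (Sum.elim F y))
    (hcard : Fintype.card ι + Fintype.card κ = Fintype.card σ) :
    algDim {x : σ → ℂ | ∀ i, eval x (F i) = 0} = Fintype.card κ := by
  have hupper := h.ringKrullDim_quotient_span_le hF hy hr
  have hlower := card_le_ringKrullDim_quotient_span_add_card (F := F) fun i => by
    simpa [he i] using eval_smul_of_isHomogeneous (hF i) 0 0
  have hzero : {x : σ → ℂ | ∀ i, eval x (F i) = 0} = zeroLocus ℂ (Ideal.span (Set.range F)) := by
    simp [zeroLocus_span]
  rw [hzero, algDim_zeroLocus]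
  refine hupper.antisymm ?_
  rw [← hcard, Nat.cast_add, add_comm] at hlower
  generalize ringKrullDim (MvPolynomial σ ℂ ⧸ Ideal.span (Set.range F)) = D at hlower ⊢
  induction D with
  | bot => simp at hlower
  | coe D =>
    induction D with
    | top => exact le_top
    | coe D => norm_cast at hlower ⊢; lia

/-! ### Lines through the vertex -/

section Lines

variable {K ι τ : Type*}

theorem eval_eq_of_mem_supported [CommSemiring K] {s : Set τ} {p : MvPolynomial τ K}
    (hp : p ∈ supported K s) {x y : τ → K} (h : ∀ j ∈ s, x j = y j) : eval x p = eval y p :=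
  eval₂Hom_congr' rfl (fun _ hj _ => h _ (mem_supported.mp hp hj)) rfl

theorem eq_zero_of_forall_sum_pow_mul_eq_zero [Field K] [Infinite K] [Fintype ι] {a : ι → ℕ}
    (ha : Function.Injective a) {t : ι → K} (h : ∀ u : K, ∑ i, u ^ a i * t i = 0) (i : ι) :
    t i = 0 := by
  classical
  have hzero : ∑ i, Polynomial.monomial (a i) (t i) = 0 :=
    Polynomial.funext fun u => by
      simpa [Polynomial.eval_finsetSum, mul_comm] using h u
  simpa [Polynomial.finsetSum_coeff, Polynomial.coeff_monomial, ha.eq_iff] using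
    congrArg (Polynomial.coeff · (a i)) hzero

theorem setOf_forall_eval_line_eq_zero [Field K] [Infinite K] [Fintype ι] [DecidableEq τ] (o : τ)
    {a e : ι → ℕ} (ha : Function.Injective a) {c : ι → MvPolynomial τ K}
    (hc : ∀ i, (c i).IsHomogeneous (e i)) (hs : ∀ i, c i ∈ supported K {j | j ≠ o}) :
    {x : τ → K | x o = 0 ∧ ∀ u v : K,
        eval (u • (Pi.single o 1 : τ → K) + v • x) (∑ i, X o ^ a i * c i) = 0} =
      {x | x o = 0 ∧ ∀ i, eval x (c i) = 0} := by
  ext x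
  refine and_congr_right fun hx => ?_
  have heval (u v : K) :
      eval (u • (Pi.single o 1 : τ → K) + v • x) (∑ i, X o ^ a i * c i) =
        ∑ i, u ^ a i * (v ^ e i * eval x (c i)) := by
    rw [map_sum]
    refine Finset.sum_congr rfl fun i _ => ?_
    rw [map_mul, map_pow, eval_X, ← eval_smul_of_isHomogeneous (hc i),
      eval_eq_of_mem_supported (hs i) (y := v • x) fun _ (hj : _ ≠ o) => by simp [hj]]
    simp [hx]
  simp only [heval]
  exact ⟨fun h => eq_zero_of_forall_sum_pow_mul_eq_zero ha fun u => by simpa using h u 1,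
    fun h u v => by simp [h]⟩

end Lines

/-! ### Linear sections of complete intersections -/

section LinearSection

variable {M : Type*} [AddCommGroup M] [Module ℂ M] {ι κ τ : Type*} [Fintype τ]
  {o o' : τ} {e : ι → ℕ} {G : ι → MvPolynomial τ ℂ} {l : κ → τ → ℂ}

/-- The equations of the section of the zero locus of `G` inside the hyperplane `{x o = 0}` by the
hyperplanes with coefficients `l j`. -/
def linearSection (o : τ) (G : ι → MvPolynomial τ ℂ) (l : κ → τ → ℂ) :
    Option ι ⊕ κ → MvPolynomial τ ℂ :=
  Sum.elim (hyperplaneSystem o G) fun j => diagonalForm (l j) 1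

/-- The degrees of the members of `linearSection o G l` when the members of `G` have degrees `e`. -/
def linearSectionDegree (e : ι → ℕ) : Option ι ⊕ κ → ℕ :=
  Sum.elim (fun i => i.elim 1 e) 1

theorem isHomogeneous_linearSection (hG : ∀ i, (G i).IsHomogeneous (e i)) (i : Option ι ⊕ κ) :
    (linearSection o G l i).IsHomogeneous (linearSectionDegree e i) := by
  cases i
  exacts [isHomogeneous_hyperplaneSystem hG _, isHomogeneous_diagonalForm _ _]

theorem linearSectionDegree_ne_zero (he : ∀ i, e i ≠ 0) (i : Option ι ⊕ κ) :
    linearSectionDegree e i ≠ 0 := by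
  rcases i with (_ | i) | _
  exacts [one_ne_zero, he i, one_ne_zero]

theorem diagonalForm_mem_polynomialFamilySubalgebra (L : M →ₗ[ℂ] τ → ℂ) (r : ℕ) :
    (fun a => diagonalForm (L a) r) ∈ polynomialFamilySubalgebra M τ := by
  have hsum : (fun a => diagonalForm (L a) r) =
      ∑ s, (fun a => C (L a s)) * fun _ => (X s ^ r : MvPolynomial τ ℂ) := by
    funext a
    simp [diagonalForm]
  rw [hsum]
  exact sum_mem fun s _ => mul_mem
    (linearMap_mem_polynomialFamilySubalgebra (monomial 0 ∘ₗ LinearMap.proj s ∘ₗ L))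
    (const_mem_polynomialFamilySubalgebra _)

theorem linearSection_mem_polynomialFamilySubalgebra {F : M → ι → MvPolynomial τ ℂ}
    {L : M → κ → τ → ℂ} (hF : ∀ i, (fun a => F a i) ∈ polynomialFamilySubalgebra M τ)
    (hL : ∀ j, (fun a => diagonalForm (L a j) 1) ∈ polynomialFamilySubalgebra M τ)
    (i : Option ι ⊕ κ) :
    (fun a => linearSection o (F a) (L a) i) ∈ polynomialFamilySubalgebra M τ := by
  cases i
  exacts [hyperplaneSystem_mem_polynomialFamilySubalgebra hF _, hL _]

theorem projectiveZeros_linearSection : projectiveZeros (linearSection o G l) =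
    {p | p.rep o = 0 ∧ (∀ i, eval p.rep (G i) = 0) ∧ ∀ j, ∑ s, l j s * p.rep s = 0} := by
  simp [projectiveZeros, linearSection, hyperplaneSystem, Option.forall, eval_diagonalForm,
    and_assoc]

theorem exists_hasSimpleAffineZeros_linearSection [Fintype ι] [Fintype κ] (o : τ)
    (he : ∀ i, e i ≠ 0) (hcard : Fintype.card ι + Fintype.card κ + 2 = Fintype.card τ) :
    ∃ (o' : τ) (b : ι → τ → ℂ) (l : κ → τ → ℂ), (∀ i, b i o = 0) ∧
      HasSimpleAffineZeros o' (linearSection o (fun i => diagonalForm (b i) (e i)) l) := by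
  classical
  obtain ⟨ε, rfl⟩ : ∃ ε : Option (Option ι ⊕ κ) ≃ τ, ε (some (.inl none)) = o :=
    exists_equiv_apply_eq (by simp; lia) _ _
  refine ⟨ε none, fun i => Pi.single (ε (some (.inl (some i)))) 1 - Pi.single (ε none) 1,
    fun j => Pi.single (ε (some (.inr j))) 1 - Pi.single (ε none) 1, by simp, ?_⟩
  convert hasSimpleAffineZeros_binomialSystem ε (b := Sum.elim (fun i => i.elim 0 1) 1)
    (linearSectionDegree_ne_zero he) (by simp [linearSectionDegree, Option.forall]) using 1
  funext i
  rcases i with (_ | i) | j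
  · simp [linearSection, hyperplaneSystem, binomialSystem, linearSectionDegree, diagonalForm,
      Pi.single_apply, apply_ite C]
  all_goals rfl

theorem HasSimpleAffineZeros.algDim_of_linearSection [Fintype ι] [Fintype κ]
    (hG : ∀ i, (G i).IsHomogeneous (e i)) (he : ∀ i, e i ≠ 0)
    (hcard : Fintype.card ι + Fintype.card κ + 2 = Fintype.card τ)
    (h : HasSimpleAffineZeros o' (linearSection o G l)) :
    algDim {x : τ → ℂ | x o = 0 ∧ ∀ i, eval x (G i) = 0} =
      ((Fintype.card κ + 1 : ℕ) : WithBot ℕ∞) := by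
  have htrivial : HasOnlyTrivialZero (Sum.elim (hyperplaneSystem o G)
      (hyperplaneSystem o' fun j => diagonalForm (l j) 1)) := fun x hx =>
    h.hasOnlyTrivialZero x <| by
      simpa [hyperplaneSystem, linearSection, Option.forall, and_comm, and_left_comm, and_assoc]
        using hx
  have hdim := htrivial.algDim_eq_card (isHomogeneous_hyperplaneSystem hG)
    (by simpa [Option.forall] using he)
    (isHomogeneous_hyperplaneSystem fun j => isHomogeneous_diagonalForm (l j) 1)
    (by simp [Option.forall]) (by simp; lia)
  simpa only [forall_eval_hyperplaneSystem_eq_zero_iff, Fintype.card_option] using hdim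

theorem HasSimpleAffineZeros.ncard_projectiveZeros_linearSection [Fintype ι] [Fintype κ]
    (hG : ∀ i, (G i).IsHomogeneous (e i)) (he : ∀ i, e i ≠ 0)
    (hcard : Fintype.card ι + Fintype.card κ + 2 = Fintype.card τ)
    (h : HasSimpleAffineZeros o' (linearSection o G l)) :
    (projectiveZeros (linearSection o G l)).ncard = ∏ i, e i := by
  rw [h.ncard_projectiveZeros (isHomogeneous_linearSection hG) (linearSectionDegree_ne_zero he)
    (by simp; lia)]
  simp [Fintype.prod_sum_type, Fintype.prod_option, linearSectionDegree]

end LinearSection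

/-! ### Parameters of cones -/

section ConeForms

/-- The forms of degree `r` in the variables other than `X o`. -/
abbrev coneForms {τ : Type*} (o : τ) (r : ℕ) : Submodule ℂ (MvPolynomial τ ℂ) :=
  homogeneousSubmodule τ ℂ r ⊓ Subalgebra.toSubmodule (supported ℂ {j | j ≠ o})

variable {ι κ τ : Type*} {o o' : τ} {e : ι → ℕ}

theorem apply_mem_polynomialFamilySubalgebra_coneForms (i : ι) :
    (fun c : Π i, coneForms o (e i) => (c i : MvPolynomial τ ℂ)) ∈
      polynomialFamilySubalgebra (Π i, coneForms o (e i)) τ :=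
  linearMap_mem_polynomialFamilySubalgebra
    ((coneForms o (e i)).subtype ∘ₗ LinearMap.proj (φ := fun i => coneForms o (e i)) i)

variable [Fintype τ]

theorem diagonalForm_mem_coneForms {b : τ → ℂ} (hb : b o = 0) (r : ℕ) :
    diagonalForm b r ∈ coneForms o r :=
  ⟨isHomogeneous_diagonalForm b r,
    diagonalForm_mem_supported (fun j hj => by rwa [not_not.mp hj]) r⟩

theorem isZariskiOpen_setOf_isSmoothCone_coneForms [Finite ι] :
    IsZariskiOpen {c : Π i, coneForms o (e i) |
      IsSmoothCone (hyperplaneSystem o fun i => (c i).1)} :=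
  isZariskiOpen_setOf_isSmoothCone
    (fun c => isHomogeneous_hyperplaneSystem fun i => (c i).2.1)
    (hyperplaneSystem_mem_polynomialFamilySubalgebra
      apply_mem_polynomialFamilySubalgebra_coneForms)

theorem isZariskiOpen_setOf_hasSimpleAffineZeros_linearSection [Finite ι] [Finite κ]
    (l : κ → τ → ℂ) :
    IsZariskiOpen {c : Π i, coneForms o (e i) |
      HasSimpleAffineZeros o' (linearSection o (fun i => (c i).1) l)} :=
  isZariskiOpen_setOf_hasSimpleAffineZeros
    (fun c => isHomogeneous_linearSection fun i => (c i).2.1)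
    (linearSection_mem_polynomialFamilySubalgebra
      apply_mem_polynomialFamilySubalgebra_coneForms
      fun _ => const_mem_polynomialFamilySubalgebra _)

theorem isZariskiOpen_setOf_hasSimpleAffineZeros_linearSection_right [Finite ι] [Finite κ]
    {G : ι → MvPolynomial τ ℂ} (hG : ∀ i, (G i).IsHomogeneous (e i)) :
    IsZariskiOpen {l : κ → τ → ℂ | HasSimpleAffineZeros o' (linearSection o G l)} :=
  isZariskiOpen_setOf_hasSimpleAffineZeros (F := fun l => linearSection o G l)
    (fun _ => isHomogeneous_linearSection hG)
    (linearSection_mem_polynomialFamilySubalgebra (F := fun _ => G) (L := fun l => l)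
      (fun i => const_mem_polynomialFamilySubalgebra (G i)) fun j =>
        diagonalForm_mem_polynomialFamilySubalgebra
          (LinearMap.proj (R := ℂ) (φ := fun _ : κ => τ → ℂ) j) 1)

theorem exists_isZariskiOpen_isSmoothCone_and_hasSimpleAffineZeros [Fintype ι] [Fintype κ]
    (o : τ) (he : ∀ i, e i ≠ 0)
    (hcard : Fintype.card ι + Fintype.card κ + 2 = Fintype.card τ) :
    ∃ (o' : τ) (l : κ → τ → ℂ) (U : Set (Π i, coneForms o (e i))), IsZariskiOpen U ∧ U.Nonempty ∧
      ∀ c ∈ U, IsSmoothCone (hyperplaneSystem o fun i => (c i).1) ∧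
        HasSimpleAffineZeros o' (linearSection o (fun i => (c i).1) l) := by
  classical
  obtain ⟨a, hao, ha⟩ := exists_isSmoothCone_hyperplaneSystem_diagonalForm o e
  obtain ⟨o', b, l, hbo, hb⟩ := exists_hasSimpleAffineZeros_linearSection (κ := κ) o he hcard
  have hsmooth := isZariskiOpen_setOf_isSmoothCone_coneForms (o := o) (e := e)
  have hsimple :=
    isZariskiOpen_setOf_hasSimpleAffineZeros_linearSection (o := o) (o' := o') (e := e) l
  exact ⟨o', l, _, hsmooth.inter hsimple,
    hsmooth.inter_nonempty hsimple ⟨fun i => ⟨_, diagonalForm_mem_coneForms (hao i) (e i)⟩, ha⟩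
      ⟨fun i => ⟨_, diagonalForm_mem_coneForms (hbo i) (e i)⟩, hb⟩, fun _ hc => hc⟩

end ConeForms

theorem prod_fin_add_eq_factorial_div {m d : ℕ} (hm : 1 ≤ m) (hmd : m ≤ d) :
    ∏ i : Fin (d + 1 - m), (m + (i : ℕ)) = d.factorial / (m - 1).factorial := by
  obtain ⟨m, rfl⟩ := Nat.exists_eq_succ_of_ne_zero (Nat.one_le_iff_ne_zero.mp hm)
  rw [Fin.prod_univ_eq_prod_range (m.succ + ·), ← Nat.ascFactorial_eq_prod_range,
    Nat.succ_sub_one]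
  refine Nat.eq_div_of_mul_eq_right (Nat.factorial_ne_zero _) ?_
  rw [Nat.factorial_mul_ascFactorial]
  congr 1
  lia

/-- Let `Y = {∑_{i=m}^{d} x₀^{d-i} fᵢ = 0} ⊆ ℙⁿ` with the `fᵢ` general
homogeneous forms of degree `i` in `x₁,…,xₙ`, so `y = [1:0:…:0]` is the only singularity,
of multiplicity `m`. The variety `Σ` of lines in `Y` through `y`, viewed inside the
hyperplane `{x₀ = 0} ≅ ℙ^{n-1}`, equals the common zero locus of the `d − m + 1` forms
`f_m, …, f_d`; and if `d ≤ m + n − 2` then `Σ` is smooth (full-rank Jacobian at nonzero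
points of the cone) of dimension `m + n − 2 − d` (cone dimension `m + n − 1 − d`) and of
degree `m(m+1)⋯d = d!/(m−1)!` (a general linear space of complementary dimension meets it
in that many points). -/
theorem stmt10 (n m d : ℕ) (hm : 1 ≤ m) (hmd : m ≤ d) (hn : 2 ≤ n) (hd : d ≤ m + n - 2) :
    ∃ U : Set (Π _i : Fin (d + 1 - m),
        ((homogeneousSubmodule (Fin (n + 1)) ℂ (m + (_i : ℕ))) ⊓
          (Subalgebra.toSubmodule (supported ℂ {j : Fin (n + 1) | j ≠ 0})) :
            Submodule ℂ (MvPolynomial (Fin (n + 1)) ℂ))),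
      IsZariskiOpen U ∧ U.Nonempty ∧
      ∀ c ∈ U,
        ({x : Fin (n + 1) → ℂ | x 0 = 0 ∧ ∀ u v : ℂ,
            eval (u • (Pi.single 0 1 : Fin (n + 1) → ℂ) + v • x)
              (∑ i : Fin (d + 1 - m),
                X 0 ^ (d - (m + (i : ℕ))) * ((c i : MvPolynomial (Fin (n + 1)) ℂ))) = 0}
          = {x : Fin (n + 1) → ℂ | x 0 = 0 ∧
              ∀ i, eval x ((c i : MvPolynomial (Fin (n + 1)) ℂ)) = 0}) ∧
        (∀ x : Fin (n + 1) → ℂ, x ≠ 0 →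
          x 0 = 0 → (∀ i, eval x ((c i : MvPolynomial (Fin (n + 1)) ℂ)) = 0) →
          Function.Surjective (Matrix.mulVecLin
            (fun (i : Option (Fin (d + 1 - m))) (j : Fin (n + 1)) =>
              Option.elim i (if j = 0 then (1 : ℂ) else 0)
                (fun i' => eval x (pderiv j ((c i' : MvPolynomial (Fin (n + 1)) ℂ))))))) ∧
        algDim {x : Fin (n + 1) → ℂ | x 0 = 0 ∧
            ∀ i, eval x ((c i : MvPolynomial (Fin (n + 1)) ℂ)) = 0}
          = ((m + n - 1 - d : ℕ) : WithBot ℕ∞) ∧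
        ∃ U' : Set (Fin (m + n - 2 - d) → (Fin (n + 1) → ℂ)),
          IsZariskiOpen U' ∧ U'.Nonempty ∧
          ∀ l ∈ U',
            ({p : Projectivization ℂ (Fin (n + 1) → ℂ) |
                p.rep 0 = 0 ∧ (∀ i, eval p.rep ((c i : MvPolynomial (Fin (n + 1)) ℂ)) = 0) ∧
                ∀ j, ∑ s, l j s * p.rep s = 0}).Finite ∧
            ({p : Projectivization ℂ (Fin (n + 1) → ℂ) |
                p.rep 0 = 0 ∧ (∀ i, eval p.rep ((c i : MvPolynomial (Fin (n + 1)) ℂ)) = 0) ∧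
                ∀ j, ∑ s, l j s * p.rep s = 0}).ncard
              = d.factorial / (m - 1).factorial := by
  have he (i : Fin (d + 1 - m)) : m + (i : ℕ) ≠ 0 := by lia
  have hexp : Function.Injective fun i : Fin (d + 1 - m) => d - (m + (i : ℕ)) := fun i j h => by
    dsimp only at h
    lia
  have hcard : Fintype.card (Fin (d + 1 - m)) + Fintype.card (Fin (m + n - 2 - d)) + 2 =
      Fintype.card (Fin (n + 1)) := by simp only [Fintype.card_fin]; lia
  obtain ⟨o', l₀, U, hU, hUne, hUgen⟩ :=
    exists_isZariskiOpen_isSmoothCone_and_hasSimpleAffineZeros 0 he hcard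
  refine ⟨U, hU, hUne, fun c hc => ?_⟩
  obtain ⟨hsmooth, hsimple⟩ := hUgen c hc
  have hhom (i : Fin (d + 1 - m)) : (c i).1.IsHomogeneous (m + (i : ℕ)) := (c i).2.1
  refine ⟨setOf_forall_eval_line_eq_zero 0 hexp hhom fun i => (c i).2.2, fun x hx hx0 hxc => ?_, ?_,
    _, isZariskiOpen_setOf_hasSimpleAffineZeros_linearSection_right hhom, ⟨l₀, hsimple⟩,
    fun l hl => ?_⟩
  · rw [← jacobianMatrix_hyperplaneSystem_map_eval]
    exact hsmooth x hx (forall_eval_hyperplaneSystem_eq_zero_iff.mpr ⟨hx0, hxc⟩)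
  · rw [hsimple.algDim_of_linearSection hhom he hcard, Fintype.card_fin]
    congr 1
    lia
  · rw [← projectiveZeros_linearSection, ← prod_fin_add_eq_factorial_div hm hmd]
    exact ⟨hl.finite_projectiveZeros (isHomogeneous_linearSection hhom) (by simp; lia),
      hl.ncard_projectiveZeros_linearSection hhom he hcard⟩
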